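/- arXiv:2001.11609 — 3 statements merged into one kernel-verified Lean document; each statement's English description precedes it below -/
import Mathlib

section
/- Let p be a prime, t > e > 1 integers, and q = p^e. Define S = {1, …, ⌊t/e⌋} if e does not divide t, and S = {1, …, t/e + 1} if e divides t. Then: (a) for every k ∈ S there exists a normalized generalized Hadamard matrix H over F_q of order p^t such that C_H is F_p-additive with ker(C_H) = k and rank(C_H) = 1 + t − (e−1)(k−1); (b) conversely, for every normalized GH matrix H over F_q of order p^t with C_H F_p-additive, ker(C_H) ∈ S. -/
/-!
The codes come from bilinear maps `B : V × W → F` over `F_p`, `F = F_q`, with `|V| = |W| = p ^ t`,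
for which every `B v`, `v ≠ 0`, is surjective: then `(B v w)` is a GH matrix, and its code consists
of the functions `B v + α`.

If an additive code has kernel dimension `k`, then the quotient by the kernel has dimension
`t + e - e k` over `F_p`, so the rank is at most `1 + t - (e - 1) (k - 1)` (`rank_add_le`). Hence
for existence it is enough to find a code whose kernel has dimension at least `k` and whose rank is
at least this number. Write `t = e m + n` with `m = k - 1`, and take
`B (x, v) (y, w) = x ⬝ y + β v (y, w)` with `x, y ∈ F ^ m` and `v, w` in spaces of dimension `n` over
`F_p` (`exists_gh_of_block`). The `x`-part gives the kernel; for the rank, `β` must keep an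
`F_p`-basis of the `v`-space independent over `F`. The choices are:
* `n = 0`: no second block, the code is linear;
* `n = e` (and `m ≥ 1`, as `t > e`): `β v (y, w) = v w + Tr (v y₀)`;
* `n > e`: `β v (y, w) = π (v w)` on the field with `p ^ n` elements, for an `F_p`-linear `π` onto
  `F` all of whose Frobenius components are nonzero (`exists_generic_map`).

Conversely, the kernel contains the constants, so its dimension is at least `1`, and comparing
cardinalities gives `e k ≤ t + e`, with equality only if the code is its own kernel, which forces
`e ∣ t`. Otherwise pick a codeword outside the kernel. Together with the kernel vectors vanishing at
the zero column it spans a `k`-dimensional space all of whose nonzero members are multiples of rows,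
hence equidistributed, and double counting zeros (`card_le_of_equidistributed`) gives
`q ^ k ≤ p ^ t`, that is `k ≤ t / e`.
-/

open scoped BigOperators

section Defs

variable {ι : Type*} {F : Type*} [Field F]

/-- `H` is a generalised Hadamard matrix with parameter `lam`: for any two distinct rows,
every difference value is attained exactly `lam` times. -/
def IsGH (lam : ℕ) (H : Matrix ι ι F) : Prop :=
  ∀ i j : ι, i ≠ j → ∀ a : F, Nat.card {s : ι // H i s - H j s = a} = lam

/-- The generalised Hadamard code `C_H` associated to a matrix `H`: the union of all
translates of the rows of `H` by constant vectors. -/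
def ghCode (H : Matrix ι ι F) : Set (ι → F) :=
  {v | ∃ (i : ι) (α : F), v = fun s => H i s + α}

/-- The kernel `K(C)` of a code `C`. -/
def kerSet (C : Set (ι → F)) : Set (ι → F) :=
  {x | ∀ α : F, (fun c => α • x + c) '' C = C}

/-- The `p`-kernel `K_p(C)` of a code `C`. -/
def pkerSet (C : Set (ι → F)) : Set (ι → F) :=
  {x | (fun c => x + c) '' C = C}

end Defs

/-- A matrix is normalized if its first row and first column are identically zero. -/
def IsNormalized {n : ℕ} {F : Type*} [Zero F] (H : Matrix (Fin n) (Fin n) F) : Prop :=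
  ∀ i j : Fin n, (i.val = 0 ∨ j.val = 0) → H i j = 0

/-- A code over `GF(p^e)` is `F_p`-additive if it is an `F_p`-linear subspace. -/
def IsFpAdditive (p : ℕ) [Fact p.Prime] {e : ℕ} {ι : Type*}
    (C : Set (ι → GaloisField p e)) : Prop :=
  ∃ S : Submodule (ZMod p) (ι → GaloisField p e), C = ↑S

/-- The rank of a code: the dimension over `F` of its `F`-linear span. -/
noncomputable def rankC (F : Type*) [Field F] {ι : Type*} (C : Set (ι → F)) : ℕ :=
  Module.finrank F (Submodule.span F C)

/-- The dimension over `F` of the kernel of a code. -/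
noncomputable def kerDim (F : Type*) [Field F] {ι : Type*} (C : Set (ι → F)) : ℕ :=
  Module.finrank F (Submodule.span F (kerSet C))

/-! ### Kernel, rank and equidistribution -/

section General

variable {p : ℕ} [Fact p.Prime] {F : Type*} [Field F] [Algebra (ZMod p) F] {ι : Type*}

/-- The kernel of an `F_p`-additive code `S`, as an `F`-linear subspace: the vectors all of whose
`F`-multiples lie in `S`. -/
def kerSub (S : Submodule (ZMod p) (ι → F)) : Submodule F (ι → F) where
  carrier := {x | ∀ α : F, α • x ∈ S}
  add_mem' := fun {x y} hx hy α => by rw [smul_add]; exact S.add_mem (hx α) (hy α)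
  zero_mem' := fun α => by rw [smul_zero]; exact S.zero_mem
  smul_mem' := fun c x hx α => by rw [smul_smul]; exact hx _

theorem mem_kerSub {S : Submodule (ZMod p) (ι → F)} {x : ι → F} :
    x ∈ kerSub S ↔ ∀ α : F, α • x ∈ S := Iff.rfl

theorem kerSub_le {S : Submodule (ZMod p) (ι → F)} {x : ι → F} (hx : x ∈ kerSub S) : x ∈ S := by
  simpa using hx 1

theorem kerSet_eq (S : Submodule (ZMod p) (ι → F)) :
    kerSet (S : Set (ι → F)) = (kerSub S : Set (ι → F)) := by
  ext x
  constructor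
  · intro hx α
    have h := hx α
    have h0 : α • x + 0 ∈ (S : Set (ι → F)) := by
      rw [← h]; exact ⟨0, S.zero_mem, rfl⟩
    simpa using h0
  · intro hx α
    have hα := hx α
    ext c
    constructor
    · rintro ⟨d, hd, rfl⟩
      exact S.add_mem hα hd
    · intro hc
      exact ⟨c - α • x, S.sub_mem hc hα, by simp⟩

theorem kerDim_eq (S : Submodule (ZMod p) (ι → F)) :
    kerDim F (S : Set (ι → F)) = Module.finrank F (kerSub S) := by
  rw [kerDim, kerSet_eq, Submodule.span_eq]

/-- Extending scalars does not raise the dimension of an additive subgroup's span. -/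
theorem finrank_span_le {M : Type*} [AddCommGroup M] [Module F M] [Module (ZMod p) M]
    [IsScalarTower (ZMod p) F M] [Finite M] (S : Submodule (ZMod p) M) :
    Module.finrank F (Submodule.span F (S : Set M)) ≤ Module.finrank (ZMod p) S := by
  let b := Module.finBasis (ZMod p) S
  have h1 : Submodule.span (ZMod p) (Set.range fun i => (b i : M)) = S := by
    have := congrArg (Submodule.map S.subtype) b.span_eq
    rw [Submodule.map_span, ← Set.range_comp] at this
    simpa [Function.comp_def] using this
  have h2 : Submodule.span F (S : Set M) = Submodule.span F (Set.range fun i => (b i : M)) := by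
    conv_lhs => rw [← h1]
    exact Submodule.span_span_of_tower _ _ _
  rw [h2]
  simpa [Set.finrank] using finrank_range_le_card (R := F) (fun i => (b i : M))

/-- Rank bound for an additive code with a large kernel: the kernel contributes its dimension over
`F` only, and the quotient by the kernel contributes at most its dimension over `F_p`. -/
theorem rank_add_le [Finite F] [Finite ι] (S : Submodule (ZMod p) (ι → F)) :
    Module.finrank F (Submodule.span F (S : Set (ι → F)))
      + Module.finrank (ZMod p) F * Module.finrank F (kerSub S)
      ≤ Module.finrank (ZMod p) S + Module.finrank F (kerSub S) := by
  set K := kerSub S with hK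
  have : Finite ((ι → F) ⧸ K) := Quotient.finite _
  let f : (ι → F) →ₗ[F] ((ι → F) ⧸ K) := K.mkQ
  let g : S →ₗ[ZMod p] ((ι → F) ⧸ K) := (f.restrictScalars (ZMod p)).comp S.subtype
  -- the kernel of `g` is `K` viewed over `F_p`
  have hker : Module.finrank (ZMod p) (LinearMap.ker g) =
      Module.finrank (ZMod p) F * Module.finrank F K := by
    rw [Module.finrank_mul_finrank]
    refine LinearEquiv.finrank_eq
      { toFun := fun x => ⟨x.1.1,
          (Submodule.Quotient.mk_eq_zero K).1 (LinearMap.mem_ker.1 x.2)⟩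
        invFun := fun x => ⟨⟨x.1, kerSub_le x.2⟩,
          LinearMap.mem_ker.2 ((Submodule.Quotient.mk_eq_zero K).2 x.2)⟩
        map_add' := fun _ _ => rfl
        map_smul' := fun _ _ => rfl
        left_inv := fun _ => rfl
        right_inv := fun _ => rfl }
  have h1 := LinearMap.finrank_range_add_finrank_ker g
  have h2 : Module.finrank F ((Submodule.span F (S : Set (ι → F))).map f)
      ≤ Module.finrank (ZMod p) (LinearMap.range g) := by
    have : (Submodule.span F (S : Set (ι → F))).map f
        = Submodule.span F ((LinearMap.range g : Submodule (ZMod p) _) : Set ((ι → F) ⧸ K)) := by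
      rw [Submodule.map_span]
      congr 1
      ext y
      simp [g]
    rw [this]
    exact finrank_span_le _
  have h3 : Module.finrank F (Submodule.span F (S : Set (ι → F))) ≤
      Module.finrank F ((Submodule.span F (S : Set (ι → F))).map f) + Module.finrank F K := by
    let D := Submodule.span F (S : Set (ι → F))
    have h := LinearMap.finrank_range_add_finrank_ker (f.domRestrict D)
    have h5 : LinearMap.range (f.domRestrict D) = D.map f := LinearMap.range_domRestrict _ _
    rw [h5] at h
    have h4 : Module.finrank F (LinearMap.ker (f.domRestrict D)) ≤ Module.finrank F K := by
      refine LinearMap.finrank_le_finrank_of_injective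
        (f := { toFun := fun x => ⟨x.1.1,
                  (Submodule.Quotient.mk_eq_zero K).1 (LinearMap.mem_ker.1 x.2)⟩
                map_add' := fun _ _ => rfl
                map_smul' := fun _ _ => rfl }) ?_
      intro x y hxy
      ext1; ext1
      simpa using hxy
    change Module.finrank F D ≤ Module.finrank F (D.map f) + _
    omega
  omega

/-- Double counting pairs `(d, s)` with `d s = 0`: a linear space of functions vanishing at a
common point and all of whose nonzero members are equidistributed has at most `|ι|` elements. -/
theorem card_le_of_equidistributed [Finite F] [Finite ι] (D : Submodule F (ι → F)) (s₀ : ι)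
    (h0 : ∀ d ∈ D, d s₀ = 0)
    (hu : ∀ d ∈ D, d ≠ 0 → Nat.card {s // d s = 0} * Nat.card F = Nat.card ι) :
    Nat.card D ≤ Nat.card ι := by
  classical
  have := Fintype.ofFinite F
  have := Fintype.ofFinite ι
  have : Fintype D := Fintype.ofFinite D
  simp only [Nat.card_eq_fintype_card] at *
  set q := Fintype.card F
  set n := Fintype.card ι
  set N := Fintype.card D
  have hq : 1 < q := Fintype.one_lt_card
  have hdc : ∑ d : D, Fintype.card {s // d.1 s = 0} = ∑ s : ι, Fintype.card {d : D // d.1 s = 0} := by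
    simp only [Fintype.card_subtype, Finset.card_filter]
    exact Finset.sum_comm
  have hl : (∑ d : D, Fintype.card {s // d.1 s = 0}) * q + n = n * q + N * n := by
    rw [← Finset.add_sum_erase _ _ (Finset.mem_univ (0 : D)), add_mul, Finset.sum_mul]
    have : ∀ d ∈ (Finset.univ.erase (0 : D)), Fintype.card {s // d.1 s = 0} * q = n := by
      intro d hd
      exact hu d.1 d.2 (by simpa using hd)
    rw [Finset.sum_congr rfl this, Finset.sum_const, Finset.card_erase_of_mem (Finset.mem_univ _),
      Finset.card_univ]
    have h1 : Fintype.card {s // (0 : D).1 s = 0} = n := by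
      simp [Fintype.card_subtype, n]
    have hN : 0 < N := Fintype.card_pos
    rw [h1]
    obtain ⟨N', hN'⟩ : ∃ N', N = N' + 1 := ⟨N - 1, by omega⟩
    change n * q + (N - 1) • n + n = _
    rw [hN']
    simp; ring
  have hr : ∀ s : ι, N ≤ Fintype.card {d : D // d.1 s = 0} * q := by
    intro s
    let ev : D →ₗ[F] F := (LinearMap.proj s).comp D.subtype
    have h := AddSubgroup.card_eq_card_quotient_mul_card_addSubgroup
      (LinearMap.ker ev).toAddSubgroup
    have hinj : Nat.card (D ⧸ LinearMap.ker ev) ≤ Nat.card F :=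
      Nat.card_le_card_of_injective _ (LinearMap.ker_eq_bot.1 (Submodule.ker_liftQ_eq_bot (LinearMap.ker ev) ev le_rfl le_rfl))
    have h2 : Nat.card (LinearMap.ker ev).toAddSubgroup = Fintype.card {d : D // d.1 s = 0} := by
      rw [← Nat.card_eq_fintype_card]
      exact Nat.card_congr (Equiv.subtypeEquivRight fun d => by
        simp [ev])
    rw [h2] at h
    have h3 : N = Nat.card D := (Nat.card_eq_fintype_card).symm
    have h4 : q = Nat.card F := (Nat.card_eq_fintype_card).symm
    rw [h3, h, h4, mul_comm]
    exact Nat.mul_le_mul_left _ hinj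
  have hr0 : Fintype.card {d : D // d.1 s₀ = 0} = N := by
    simp [Fintype.card_subtype, h0, N]
  have hr' : N * q + (n - 1) * N ≤ (∑ s : ι, Fintype.card {d : D // d.1 s = 0}) * q := by
    rw [← Finset.add_sum_erase _ _ (Finset.mem_univ s₀), add_mul, Finset.sum_mul, hr0]
    refine Nat.add_le_add_left ?_ _
    have := Finset.card_nsmul_le_sum (Finset.univ.erase s₀)
      (fun s => Fintype.card {d : D // d.1 s = 0} * q) N (fun s _ => hr s)
    rwa [Finset.card_erase_of_mem (Finset.mem_univ _), Finset.card_univ, smul_eq_mul] at this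
  rw [← hdc] at hr'
  have hn : 0 < n := Fintype.card_pos_iff.mpr ⟨s₀⟩
  obtain ⟨n', hn'⟩ : ∃ n', n = n' + 1 := ⟨n - 1, by omega⟩
  obtain ⟨q', hq'⟩ : ∃ q', q = q' + 1 := ⟨q - 1, by omega⟩
  have hq'0 : 0 < q' := by omega
  rw [hn', hq'] at hl
  rw [hn', hq'] at hr'
  rw [hn']
  simp only [Nat.add_sub_cancel] at hr'
  have : N * q' ≤ (n' + 1) * q' := by nlinarith
  exact Nat.le_of_mul_le_mul_right this hq'0

end General

/-! ### Codes of GH matrices and the bound on the kernel -/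

section Code

variable {p : ℕ} [Fact p.Prime] {F : Type*} [Field F] [Algebra (ZMod p) F] {ι : Type*}

theorem natCard_ghCode [Finite ι] {lam : ℕ} {H : Matrix ι ι F} (hH : IsGH lam H) (s₀ : ι)
    (hs : ∀ i, H i s₀ = 0) : Nat.card (ghCode H) = Nat.card ι * Nat.card F := by
  rw [← Nat.card_prod]
  symm
  refine Nat.card_congr (Equiv.ofBijective
    (fun x : ι × F => (⟨fun s => H x.1 s + x.2, x.1, x.2, rfl⟩ : ghCode H)) ⟨?_, ?_⟩)
  · rintro ⟨i, α⟩ ⟨j, β⟩ hij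
    have h : ∀ s, H i s + α = H j s + β := fun s => congrFun (congrArg Subtype.val hij) s
    have hαβ : α = β := by simpa [hs] using h s₀
    subst hαβ
    by_cases hne : i = j
    · rw [hne]
    · -- a constant difference cannot take both values `0` and `1` equally often
      exfalso
      have h0 := hH i j hne 0
      have h1 := hH i j hne 1
      have hd : ∀ s, H i s - H j s = 0 := fun s => sub_eq_zero.2 (by simpa using h s)
      have e1 : IsEmpty {s : ι // H i s - H j s = 1} := ⟨fun x => by
        have := x.2; rw [hd] at this; exact zero_ne_one this⟩
      rw [Nat.card_of_isEmpty] at h1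
      rw [← h1] at h0
      have : Nonempty {s : ι // H i s - H j s = 0} := ⟨⟨s₀, hd _⟩⟩
      exact Nat.card_pos.ne' h0
  · rintro ⟨v, i, α, rfl⟩
    exact ⟨(i, α), rfl⟩

theorem const_mem_kerSub {H : Matrix ι ι F} {S : Submodule (ZMod p) (ι → F)}
    (hS : ghCode H = S) (i₀ : ι) (hi : ∀ s, H i₀ s = 0) : (fun _ => 1 : ι → F) ∈ kerSub S := by
  intro α
  rw [← SetLike.mem_coe, ← hS]
  exact ⟨i₀, α, by ext s; simp [hi]⟩

theorem one_le_finrank_kerSub [Finite ι] {H : Matrix ι ι F} {S : Submodule (ZMod p) (ι → F)}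
    (hS : ghCode H = S) (i₀ : ι) (hi : ∀ s, H i₀ s = 0) : 1 ≤ Module.finrank F (kerSub S) := by
  have : Nontrivial (kerSub S) := ⟨⟨⟨_, const_mem_kerSub hS i₀ hi⟩, 0, fun h => by
    have := congrFun (congrArg Subtype.val h) i₀
    simp at this⟩⟩
  exact Module.finrank_pos

/-- Codewords vanishing at the zero column are rows, hence equidistributed when nonzero. -/
theorem equidistributed_of_mem [Finite ι] {lam : ℕ} {H : Matrix ι ι F} (hH : IsGH lam H)
    (i₀ s₀ : ι) (hi : ∀ s, H i₀ s = 0) (hs : ∀ i, H i s₀ = 0) {v : ι → F} (hv : v ∈ ghCode H)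
    (hv0 : v s₀ = 0) (hne : v ≠ 0) : Nat.card {s // v s = 0} = lam := by
  obtain ⟨i, α, rfl⟩ := hv
  have hα : α = 0 := by simpa [hs] using hv0
  subst hα
  have hi0 : i ≠ i₀ := by
    rintro rfl
    exact hne (by ext s; simp [hi])
  have := hH i i₀ hi0 0
  simpa [hi] using this

/-- If `e ∣ t`, the bound only compares the sizes of the kernel and the code. Otherwise the code is
strictly larger than its kernel, and a codeword `v` outside the kernel allows the double count of
`card_le_of_equidistributed` to be applied to a space as large as the kernel. -/
theorem kernel_bound [Finite F] [Finite ι] {e t : ℕ} (he : 0 < e) (het : e ≤ t)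
    (hF : Nat.card F = p ^ e) (hι : Nat.card ι = p ^ t) {H : Matrix ι ι F}
    (hH : IsGH (p ^ (t - e)) H) (i₀ s₀ : ι) (hi : ∀ s, H i₀ s = 0) (hs : ∀ i, H i s₀ = 0)
    {S : Submodule (ZMod p) (ι → F)} (hS : ghCode H = S) :
    if e ∣ t then Module.finrank F (kerSub S) ≤ t / e + 1
    else Module.finrank F (kerSub S) ≤ t / e := by
  have hp := (Fact.out : p.Prime).one_lt
  have hcS : Nat.card S = p ^ (t + e) := by
    have := natCard_ghCode hH s₀ hs
    rw [hS, hι, hF, ← pow_add] at this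
    exact this
  have hcK : Nat.card (kerSub S) = p ^ (e * Module.finrank F (kerSub S)) := by
    rw [Module.natCard_eq_pow_finrank (K := F), hF, pow_mul]
  have hle : Nat.card (kerSub S) ≤ Nat.card S :=
    Nat.card_le_card_of_injective (fun x : kerSub S => (⟨x.1, kerSub_le x.2⟩ : S))
      (fun x y h => Subtype.ext (congrArg (fun z : S => z.1) h))
  rw [hcS, hcK, Nat.pow_le_pow_iff_right hp] at hle
  set k := Module.finrank F (kerSub S) with hk
  split_ifs with hdvd
  · obtain ⟨m, rfl⟩ := hdvd
    rw [Nat.mul_div_cancel_left _ he]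
    have : e * k ≤ e * (m + 1) := by rw [mul_add, mul_one]; exact hle
    exact Nat.le_of_mul_le_mul_left this he
  · have hne : ∃ v ∈ S, v ∉ kerSub S := by
      by_contra hcon
      push Not at hcon
      have hge : Nat.card S ≤ Nat.card (kerSub S) :=
        Nat.card_le_card_of_injective (fun x : S => (⟨x.1, hcon _ x.2⟩ : kerSub S))
          (fun x y h => Subtype.ext (congrArg (fun z : kerSub S => z.1) h))
      rw [hcS, hcK, Nat.pow_le_pow_iff_right hp] at hge
      exact hdvd ((Nat.dvd_add_left (dvd_refl e)).1 ⟨k, le_antisymm hge hle⟩)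
    obtain ⟨v, hvS, hvK⟩ := hne
    have h1K : (fun _ => 1 : ι → F) ∈ kerSub S := const_mem_kerSub hS i₀ hi
    -- normalise `v` to vanish at the zero column
    let v₀ : ι → F := v - v s₀ • (fun _ => 1 : ι → F)
    have hv0S : v₀ ∈ S := S.sub_mem hvS (h1K _)
    have hv0K : v₀ ∉ kerSub S := fun h => hvK (by
      have := (kerSub S).add_mem h ((kerSub S).smul_mem (v s₀) h1K)
      simpa [v₀] using this)
    have hv00 : v₀ s₀ = 0 := by simp [v₀]
    let K₀ : Submodule F (ι → F) := kerSub S ⊓ LinearMap.ker (LinearMap.proj s₀ : (ι → F) →ₗ[F] F)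
    -- the parameters `(κ, λ)` of the space spanned by `K₀` and `v₀`; adding constants to `K₀`
    -- recovers the kernel, so this space has as many elements as the kernel
    let Φ : K₀ × F →ₗ[F] (ι → F) := K₀.subtype.coprod (LinearMap.toSpanSingleton F _ v₀)
    have hΦ : ∀ x : K₀ × F, Φ x = x.1.1 + x.2 • v₀ := fun x => by simp [Φ]
    have hΦinj : Function.Injective Φ := by
      rw [injective_iff_map_eq_zero]
      rintro ⟨κ, c⟩ h
      rw [hΦ] at h
      have hc : c = 0 := by
        by_contra hc
        apply hv0K
        have h2 : v₀ = (-c⁻¹) • κ.1 := by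
          have h3 : c • v₀ = - κ.1 := by
            rw [eq_neg_iff_add_eq_zero, add_comm]; exact h
          rw [neg_smul, ← smul_neg, ← h3, smul_smul, inv_mul_cancel₀ hc, one_smul]
        rw [h2]
        exact (kerSub S).smul_mem _ κ.2.1
      subst hc
      simp only [zero_smul, add_zero] at h
      ext1
      · exact Subtype.ext h
      · rfl
    have hcard : Nat.card (LinearMap.range Φ) = Nat.card (kerSub S) := by
      have e1 : Nat.card (LinearMap.range Φ) = Nat.card (K₀ × F) :=
        Nat.card_congr (LinearEquiv.ofInjective Φ hΦinj).symm.toEquiv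
      rw [e1]
      refine Nat.card_congr
        { toFun := fun x => ⟨x.1.1 + x.2 • (fun _ => 1 : ι → F),
            (kerSub S).add_mem x.1.2.1 ((kerSub S).smul_mem _ h1K)⟩
          invFun := fun y => (⟨y.1 - y.1 s₀ • (fun _ => 1 : ι → F),
            (kerSub S).sub_mem y.2 ((kerSub S).smul_mem _ h1K), by simp⟩, y.1 s₀)
          left_inv := ?_
          right_inv := ?_ }
      · rintro ⟨⟨κ, hκ, hκ0⟩, c⟩
        have hκ0' : κ s₀ = 0 := hκ0
        simp [hκ0']
      · rintro ⟨y, hy⟩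
        simp
    have hDle := card_le_of_equidistributed (LinearMap.range Φ) s₀ (by
        rintro _ ⟨x, rfl⟩
        have hx : x.1.1 s₀ = 0 := x.1.2.2
        rw [hΦ]
        simp [hx, hv00]) (by
        rintro _ ⟨⟨κ, c⟩, rfl⟩ hne
        have hκ0 : κ.1 s₀ = 0 := κ.2.2
        rw [hF, hι]
        suffices h : Nat.card {s // Φ (κ, c) s = 0} = p ^ (t - e) by
          rw [h, ← pow_add, Nat.sub_add_cancel het]
        rw [hΦ] at hne ⊢
        by_cases hc : c = 0
        · subst hc
          simp only [zero_smul, add_zero] at hne ⊢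
          refine equidistributed_of_mem hH i₀ s₀ hi hs ?_ hκ0 hne
          rw [hS]; exact kerSub_le κ.2.1
        · -- a multiple by `c` of the codeword `c⁻¹ κ + v₀`
          have h2 : κ.1 + c • v₀ = c • (c⁻¹ • κ.1 + v₀) := by
            rw [smul_add, smul_smul, mul_inv_cancel₀ hc, one_smul]
          simp only [h2] at hne ⊢
          have h3 := equidistributed_of_mem (v := c⁻¹ • κ.1 + v₀) hH i₀ s₀ hi hs (by
            rw [hS]; exact S.add_mem (κ.2.1 _) hv0S) (by simp [hκ0, hv00])
            (fun h => hne (by rw [h, smul_zero]))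
          rw [← h3]
          exact Nat.card_congr (Equiv.subtypeEquivRight fun s => by
            rw [Pi.smul_apply, smul_eq_mul, mul_eq_zero, or_iff_right hc]))
    rw [hcard, hcK, hι, Nat.pow_le_pow_iff_right hp] at hDle
    rw [Nat.le_div_iff_mul_le he, mul_comm]
    exact hDle

end Code

/-! ### GH matrices from bilinear maps -/

section Construction

variable {p : ℕ} [Fact p.Prime] {F : Type*} [Field F] [Algebra (ZMod p) F]

theorem card_fiber_of_surjective {W : Type*} [AddCommGroup W] [Finite W] [Finite F]
    (f : W →+ F) (hf : Function.Surjective f) (a : F) :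
    Nat.card {w // f w = a} * Nat.card F = Nat.card W := by
  have := Fintype.ofFinite F
  have h : ∀ c : F, Nat.card {w // f w = c} = Nat.card {w // f w = a} := by
    intro c
    obtain ⟨u, hu⟩ := hf (a - c)
    refine Nat.card_congr ((Equiv.addRight u).subtypeEquiv fun w => ?_)
    simp only [Equiv.coe_addRight, map_add, hu]
    constructor
    · rintro rfl; abel
    · intro h
      linear_combination h
  rw [← Nat.card_congr (Equiv.sigmaFiberEquiv f), Nat.card_sigma, Finset.sum_congr rfl
    (fun c _ => h c), Finset.sum_const, Finset.card_univ, Nat.card_eq_fintype_card (α := F),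
    smul_eq_mul, mul_comm]

theorem exists_equiv_zero {V : Type*} [AddCommGroup V] [Finite V] {n : ℕ} (h : Nat.card V = n) :
    ∃ f : Fin n ≃ V, ∀ i : Fin n, i.val = 0 → f i = 0 := by
  classical
  have f := (Finite.equivFinOfCardEq h).symm
  have hn : 0 < n := h ▸ Nat.card_pos
  refine ⟨f.trans (Equiv.swap (f ⟨0, hn⟩) 0), fun i hi => ?_⟩
  have : i = ⟨0, hn⟩ := Fin.ext hi
  simp [this]

/-- A bilinear map `B` over `F_p` with values in `F` whose partial maps `B v`, `v ≠ 0`, are all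
surjective is a GH matrix, and its code consists of the functions `B v + α`. -/
theorem exists_gh_of_bilinear [Finite F] {e t : ℕ} (het : e ≤ t) (hF : Nat.card F = p ^ e)
    {V W : Type*} [AddCommGroup V] [Module (ZMod p) V] [Finite V]
    [AddCommGroup W] [Module (ZMod p) W] [Finite W]
    (hV : Nat.card V = p ^ t) (hW : Nat.card W = p ^ t)
    (B : V →ₗ[ZMod p] W →ₗ[ZMod p] F) (hB : ∀ v, v ≠ 0 → Function.Surjective (B v)) :
    ∃ (H : Matrix (Fin (p ^ t)) (Fin (p ^ t)) F) (σ : Fin (p ^ t) ≃ W)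
      (S : Submodule (ZMod p) (Fin (p ^ t) → F)),
      IsGH (p ^ (t - e)) H ∧ IsNormalized H ∧ ghCode H = S ∧
      ∀ f, f ∈ S ↔ ∃ (v : V) (α : F), f = fun s => B v (σ s) + α := by
  obtain ⟨τ, hτ⟩ := exists_equiv_zero hV
  obtain ⟨σ, hσ⟩ := exists_equiv_zero hW
  have hp := (Fact.out : p.Prime).pos
  let Ψ : V × F →ₗ[ZMod p] (Fin (p ^ t) → F) :=
    { toFun := fun x s => B x.1 (σ s) + x.2
      map_add' := fun x y => by
        ext s; simp only [Prod.fst_add, Prod.snd_add, map_add, LinearMap.add_apply, Pi.add_apply]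
        ring
      map_smul' := fun c x => by
        ext s; simp }
  have hΨ : ∀ f, f ∈ LinearMap.range Ψ ↔ ∃ (v : V) (α : F), f = fun s => B v (σ s) + α := by
    intro f
    constructor
    · rintro ⟨x, rfl⟩; exact ⟨x.1, x.2, rfl⟩
    · rintro ⟨v, α, rfl⟩; exact ⟨(v, α), rfl⟩
  refine ⟨fun i s => B (τ i) (σ s), σ, LinearMap.range Ψ, ?_, ?_, ?_, hΨ⟩
  · intro i j hij a
    have hne : τ i - τ j ≠ 0 := sub_ne_zero.2 (fun h => hij (τ.injective h))
    have h1 := card_fiber_of_surjective (B (τ i - τ j)).toAddMonoidHom (hB _ hne) a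
    have h2 : Nat.card {s // B (τ i) (σ s) - B (τ j) (σ s) = a} =
        Nat.card {w // (B (τ i - τ j)).toAddMonoidHom w = a} :=
      Nat.card_congr (σ.subtypeEquiv fun s => by simp)
    rw [h2]
    have h3 : p ^ t = p ^ (t - e) * p ^ e := by rw [← pow_add, Nat.sub_add_cancel het]
    rw [hF, hW] at h1
    replace h1 := h1.trans h3
    exact Nat.eq_of_mul_eq_mul_right (pow_pos hp e) h1
  · rintro i j (h | h)
    · simp [hτ i h]
    · simp [hσ j h]
  · ext f
    rw [SetLike.mem_coe, hΨ]
    constructor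
    · rintro ⟨i, α, rfl⟩; exact ⟨τ i, α, rfl⟩
    · rintro ⟨v, α, rfl⟩; exact ⟨τ.symm v, α, by ext s; simp⟩

/-- The block form `B (x, v) (y, w) = x ⬝ y + β v (y, w)`. The coordinates `x` give `m` kernel
dimensions on top of the constants, and `β` is required to be so far from `F`-linear that an
`F_p`-basis of `V'` stays independent over `F`, even modulo the coordinate functions of `y`. By the
rank bound, the kernel then has dimension exactly `m + 1`. -/
theorem exists_gh_of_block [Finite F] {e t m t' : ℕ} (he : 1 < e) (het : e ≤ t)
    (ht : t = e * m + t') (hF : Module.finrank (ZMod p) F = e)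
    {V' W' : Type*} [AddCommGroup V'] [Module (ZMod p) V'] [Finite V']
    [AddCommGroup W'] [Module (ZMod p) W'] [Finite W']
    (hW : Module.finrank (ZMod p) W' = t') (b : Module.Basis (Fin t') (ZMod p) V')
    (β : V' →ₗ[ZMod p] ((Fin m → F) × W') →ₗ[ZMod p] F)
    (hβ : ∀ v, v ≠ 0 → Function.Surjective fun w => β v (0, w))
    (hind : ∀ (d : Fin t' → F) (a : Fin m → F),
      (∀ y w, ∑ j, d j * β (b j) (y, w) + ∑ i, a i * y i = 0) → d = 0) :
    ∃ H : Matrix (Fin (p ^ t)) (Fin (p ^ t)) F,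
      IsGH (p ^ (t - e)) H ∧ IsNormalized H ∧
      (∃ S : Submodule (ZMod p) (Fin (p ^ t) → F), ghCode H = S) ∧
      kerDim F (ghCode H) = m + 1 ∧ rankC F (ghCode H) = 1 + m + t' := by
  classical
  have hV : Module.finrank (ZMod p) V' = t' := by
    rw [Module.finrank_eq_card_basis b, Fintype.card_fin]
  have hcF : Nat.card F = p ^ e := by
    rw [Module.natCard_eq_pow_finrank (K := ZMod p), hF, Nat.card_zmod]
  have hcV : Nat.card ((Fin m → F) × V') = p ^ t := by
    rw [Nat.card_prod, Nat.card_fun, hcF, Nat.card_eq_fintype_card, Fintype.card_fin,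
      Module.natCard_eq_pow_finrank (K := ZMod p) (V := V'), hV, Nat.card_zmod, ← pow_mul,
      ← pow_add, ht]
  have hcW : Nat.card ((Fin m → F) × W') = p ^ t := by
    rw [Nat.card_prod, Nat.card_fun, hcF, Nat.card_eq_fintype_card, Fintype.card_fin,
      Module.natCard_eq_pow_finrank (K := ZMod p) (V := W'), hW, Nat.card_zmod, ← pow_mul,
      ← pow_add, ht]
  let B : ((Fin m → F) × V') →ₗ[ZMod p] ((Fin m → F) × W') →ₗ[ZMod p] F :=
    LinearMap.mk₂ (ZMod p) (fun x y => ∑ i, x.1 i * y.1 i + β x.2 y)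
      (fun x x' y => by simp [add_mul, Finset.sum_add_distrib]; ring)
      (fun c x y => by simp [Finset.smul_sum])
      (fun x y y' => by simp [mul_add, Finset.sum_add_distrib]; ring)
      (fun c x y => by simp [Finset.smul_sum])
  have hBa : ∀ x y, B x y = ∑ i, x.1 i * y.1 i + β x.2 y := fun _ _ => rfl
  have hB : ∀ x, x ≠ 0 → Function.Surjective (B x) := by
    rintro ⟨x, v⟩ hne a
    by_cases hv : v = 0
    · subst hv
      obtain ⟨i, hi⟩ : ∃ i, x i ≠ 0 := by
        by_contra hcon
        push Not at hcon
        exact hne (by ext1 <;> [exact funext hcon; rfl])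
      refine ⟨(Pi.single i ((x i)⁻¹ * a), 0), ?_⟩
      rw [hBa, Finset.sum_eq_single i]
      · simp [hi]
      · intro j _ hj; simp [hj]
      · simp
    · obtain ⟨w, hw⟩ := hβ v hv a
      refine ⟨(0, w), ?_⟩
      rw [hBa]; simpa using hw
  obtain ⟨H, σ, S, hGH, hN, hS, hmem⟩ := exists_gh_of_bilinear het hcF hcV hcW B hB
  refine ⟨H, hGH, hN, ⟨S, hS⟩, ?_⟩
  rw [hS, kerDim_eq, rankC]
  have hpos : 0 < p ^ t := pow_pos (Fact.out : p.Prime).pos t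
  -- independence of the constants, the coordinates of `y`, and the images of the basis `b`
  let f : (Option (Fin m)) ⊕ Fin t' → (Fin (p ^ t) → F) :=
    Sum.elim (fun o => o.elim (fun _ => 1) (fun i s => (σ s).1 i)) (fun j s => β (b j) (σ s))
  have hf : LinearIndependent F f := by
    rw [Fintype.linearIndependent_iff]
    intro g hg
    have hall : ∀ y w, g (Sum.inl none) + ∑ i, g (Sum.inl (some i)) * y i
        + ∑ j, g (Sum.inr j) * β (b j) (y, w) = 0 := by
      intro y w
      have := congrFun hg (σ.symm (y, w))
      simpa [f, Fintype.sum_sum_type, Fintype.sum_option] using this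
    have hc : g (Sum.inl none) = 0 := by
      have := hall 0 0
      have h0 : ∀ j, β (b j) (0, 0) = 0 := fun j => (β (b j)).map_zero
      simpa [h0] using this
    have hd := hind (fun j => g (Sum.inr j)) (fun i => g (Sum.inl (some i))) (fun y w => by
      have := hall y w
      rw [hc, zero_add, add_comm] at this
      exact this)
    have hd' : ∀ j, g (Sum.inr j) = 0 := fun j => congrFun hd j
    rintro ((_ | i) | j)
    · exact hc
    · have := hall (Pi.single i 1) 0
      simpa [hc, hd', Pi.single_apply] using this
    · exact hd' j
  have hfK : ∀ o, f (Sum.inl o) ∈ kerSub S := by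
    rintro (_ | i) α
    · rw [hmem]
      exact ⟨0, α, by ext s; simp [f]⟩
    · rw [hmem]
      refine ⟨(Pi.single i α, 0), 0, ?_⟩
      ext s
      simp [f, hBa, Pi.single_apply]
  have hfS : ∀ o, f o ∈ Submodule.span F (S : Set (Fin (p ^ t) → F)) := by
    rintro (o | j)
    · exact Submodule.subset_span (kerSub_le (hfK o))
    · refine Submodule.subset_span ((hmem _).2 ⟨(0, b j), 0, ?_⟩)
      ext s
      simp [f, hBa]
  have hk : m + 1 ≤ Module.finrank F (kerSub S) := by
    have h1 : LinearIndependent F (fun o => (⟨f (Sum.inl o), hfK o⟩ : kerSub S)) := by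
      refine LinearIndependent.of_comp (kerSub S).subtype ?_
      exact hf.comp Sum.inl Sum.inl_injective
    simpa using h1.fintype_card_le_finrank
  have hr : m + 1 + t' ≤ Module.finrank F (Submodule.span F (S : Set (Fin (p ^ t) → F))) := by
    have h1 : LinearIndependent F
        (fun o => (⟨f o, hfS o⟩ : Submodule.span F (S : Set (Fin (p ^ t) → F)))) :=
      LinearIndependent.of_comp (Submodule.span F (S : Set (Fin (p ^ t) → F))).subtype hf
    simpa using h1.fintype_card_le_finrank
  have hub := rank_add_le S
  have hSdim : Module.finrank (ZMod p) S = t + e := by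
    have h1 := natCard_ghCode hGH ⟨0, hpos⟩ (fun i => hN _ _ (Or.inr rfl))
    rw [hS, hcF, Nat.card_eq_fintype_card (α := Fin (p ^ t)), Fintype.card_fin, ← pow_add] at h1
    have h2 : Nat.card S = p ^ Module.finrank (ZMod p) S := by
      rw [Module.natCard_eq_pow_finrank (K := ZMod p), Nat.card_zmod]
    exact Nat.pow_right_injective (Fact.out : p.Prime).two_le (h2.symm.trans h1)
  rw [hF, hSdim] at hub
  generalize Module.finrank F (kerSub S) = k at hk hub ⊢
  generalize Module.finrank F (Submodule.span F (S : Set (Fin (p ^ t) → F))) = r at hr hub ⊢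
  clear_value f B
  clear hf hfK hfS f hSdim hmem hS hN hGH hpos S σ H hB hBa B hcV hcW hind hβ β
  subst ht
  obtain ⟨e', rfl⟩ : ∃ e', e = e' + 2 := ⟨e - 2, by omega⟩
  obtain ⟨k', rfl⟩ : ∃ k', k = m + 1 + k' := ⟨k - (m + 1), by omega⟩
  obtain ⟨r', rfl⟩ : ∃ r', r = m + 1 + t' + r' := ⟨r - (m + 1 + t'), by omega⟩
  have : r' + (e' + 1) * k' ≤ 0 := by nlinarith
  have hr0 : r' = 0 := by omega
  have hk0 : (e' + 1) * k' = 0 := by omega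
  have hk0' : k' = 0 := by simpa using hk0
  omega

end Construction

/-! ### Trace forms and linearised polynomials -/

section Fields

variable {p : ℕ} [Fact p.Prime]

/-- A linearised polynomial of `p`-degree less than `n` that vanishes on a field of `p ^ n`
elements is zero. -/
theorem linearized_eq_zero {L M : Type*} [Field L] [Finite L] [Field M] {n : ℕ}
    (hL : Nat.card L = p ^ n) (φ : L →+* M) (c : ℕ → M)
    (h : ∀ w, ∑ j ∈ Finset.range n, c j * φ w ^ p ^ j = 0) : ∀ j < n, c j = 0 := by
  classical
  intro j hj
  have := Fintype.ofFinite L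
  have hp := (Fact.out : p.Prime).one_lt
  let P : Polynomial M := ∑ j ∈ Finset.range n, Polynomial.monomial (p ^ j) (c j)
  have hP : P = 0 := by
    refine Polynomial.eq_zero_of_natDegree_lt_card_of_eval_eq_zero P φ.injective (fun w => ?_) ?_
    · simpa [P, Polynomial.eval_finsetSum] using h w
    · rw [← Nat.card_eq_fintype_card, hL]
      have h1 : P.natDegree ≤ p ^ (n - 1) := by
        refine Polynomial.natDegree_sum_le_of_forall_le _ _ (fun i hi => ?_)
        refine (Polynomial.natDegree_monomial_le _).trans ?_
        have := Finset.mem_range.1 hi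
        exact Nat.pow_le_pow_right hp.le (by omega)
      exact h1.trans_lt (Nat.pow_lt_pow_right hp (by omega))
  have h2 : P.coeff (p ^ j) = c j := by
    simp only [P, Polynomial.finsetSum_coeff, Polynomial.coeff_monomial]
    rw [Finset.sum_eq_single j]
    · simp
    · intro i _ hij
      rw [if_neg]
      exact fun hh => hij (Nat.pow_right_injective hp hh)
    · intro hh; exact absurd (Finset.mem_range.2 hj) hh
  rw [← h2, hP, Polynomial.coeff_zero]

variable {F : Type*} [Field F] [Algebra (ZMod p) F]
variable {L : Type*} [Field L] [Finite L] [Algebra (ZMod p) L]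

theorem trace_independent {n : ℕ} (b : Module.Basis (Fin n) (ZMod p) L) (d : Fin n → F)
    (h : ∀ y, ∑ j, d j * algebraMap (ZMod p) F (Algebra.trace (ZMod p) L (b j * y)) = 0) :
    d = 0 := by
  funext i
  have := h (b.traceDual i)
  simp only [Module.Basis.trace_mul_traceDual] at this
  simpa using this

theorem trace_surjective {n : ℕ} (u : Fin n → L) (hu : LinearIndependent (ZMod p) u)
    (a : Fin n → ZMod p) : ∃ w, ∀ i, Algebra.trace (ZMod p) L (u i * w) = a i := by
  let g : L →ₗ[ZMod p] (Fin n → ZMod p) :=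
    LinearMap.pi fun i => (Algebra.trace (ZMod p) L).comp (LinearMap.mulLeft (ZMod p) (u i))
  suffices h : LinearMap.range g = ⊤ by
    obtain ⟨w, hw⟩ := LinearMap.range_eq_top.1 h a
    exact ⟨w, fun i => congrFun hw i⟩
  by_contra hne
  obtain ⟨f, hf0, hf⟩ := Submodule.exists_le_ker_of_lt_top _ (lt_top_iff_ne_top.2 hne)
  apply hf0
  have hsum : ∑ i, f (Pi.single i 1) • u i = 0 := by
    refine (traceForm_nondegenerate (ZMod p) L).1 _ (fun w => ?_)
    have h1 : f (g w) = 0 := hf ⟨w, rfl⟩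
    rw [LinearMap.pi_apply_eq_sum_univ f (g w)] at h1
    rw [Algebra.traceForm_apply, Finset.sum_mul, map_sum, ← h1]
    refine Finset.sum_congr rfl fun i _ => ?_
    rw [smul_mul_assoc, map_smul, smul_eq_mul, smul_eq_mul, mul_comm]
    congr 2
    ext j
    simp [Pi.single_apply, eq_comm]
  have := Fintype.linearIndependent_iff.1 hu _ hsum
  ext i
  simpa using this i

/-- A generator of the multiplicative group, with its order and the independence of its powers. -/
theorem exists_power_basis_gen : ∃ θ : L, (∀ k : ℕ, θ ^ k = 1 → Nat.card L - 1 ∣ k) ∧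
    θ ≠ 0 ∧ LinearIndependent (ZMod p) (fun i : Fin (Module.finrank (ZMod p) L) => θ ^ (i : ℕ)) := by
  obtain ⟨g, hg⟩ := IsCyclic.exists_generator (α := Lˣ)
  refine ⟨g, fun k hk => ?_, g.ne_zero, ?_⟩
  · have h1 : orderOf g = Nat.card L - 1 := by
      rw [orderOf_eq_card_of_forall_mem_zpowers hg, Nat.card_units]
    rw [← h1]
    exact orderOf_dvd_of_pow_eq_one (Units.ext (by simpa using hk))
  · have htop : IntermediateField.adjoin (ZMod p) {(g : L)} = ⊤ := by
      rw [eq_top_iff]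
      intro x _
      by_cases hx : x = 0
      · rw [hx]; exact zero_mem _
      · obtain ⟨k, hk⟩ := hg (Units.mk0 x hx)
        have : x = (g : L) ^ k := by
          have := congrArg Units.val hk
          simpa using this.symm
        rw [this]
        exact zpow_mem (IntermediateField.mem_adjoin_simple_self _ _) k
    have hdeg : (minpoly (ZMod p) (g : L)).natDegree = Module.finrank (ZMod p) L := by
      rw [← IntermediateField.adjoin.finrank (Algebra.IsIntegral.isIntegral _), htop,
        IntermediateField.finrank_top']
    rw [← hdeg]
    exact linearIndependent_pow _

/-- For a generator `θ` of the multiplicative group of the field with `p ^ n` elements, this says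
that no `θ ^ (e p ^ j)` is a `(p ^ e - 1)`-th root of unity. The factor `p ^ j` is coprime to
`p ^ n - 1`, and `p ^ e - 1` can be replaced by `p ^ d - 1` with `d = gcd n e ≤ n - e`, after which
the right-hand side is positive and too small. -/
theorem arith_not_dvd {e n j : ℕ} (he : 0 < e) (hen : e < n) :
    ¬ (p ^ n - 1 ∣ p ^ j * e * (p ^ e - 1)) := by
  intro h
  have hpp := (Fact.out : p.Prime)
  have hp := hpp.one_lt
  have hcop : Nat.Coprime (p ^ n - 1) (p ^ j) := by
    apply Nat.Coprime.pow_right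
    rw [Nat.coprime_comm, hpp.coprime_iff_not_dvd]
    intro hd
    have h1 : p ∣ p ^ n := dvd_pow_self p (by omega)
    have h2 := (Nat.dvd_sub h1 hd)
    have h3 : 0 < p ^ n := pow_pos hpp.pos n
    rw [show p ^ n - (p ^ n - 1) = 1 by omega] at h2
    exact hpp.one_lt.ne' (Nat.dvd_one.1 h2)
  rw [mul_assoc] at h
  have h1 := hcop.dvd_of_dvd_mul_left h
  have h2 : p ^ n - 1 ∣ e * (p ^ n.gcd e - 1) := by
    rw [← Nat.pow_sub_one_gcd_pow_sub_one, ← Nat.gcd_mul_left]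
    exact Nat.dvd_gcd (Dvd.intro_left _ rfl) h1
  have hd : n.gcd e ≤ n - e := by
    have h3 : n.gcd e ∣ n - e := Nat.dvd_sub (Nat.gcd_dvd_left _ _) (Nat.gcd_dvd_right _ _)
    exact Nat.le_of_dvd (by omega) h3
  have hd0 : 0 < n.gcd e := Nat.gcd_pos_of_pos_right _ he
  have hee : e < p ^ e := Nat.lt_pow_self hp
  have hpg : p ^ n.gcd e ≤ p ^ (n - e) := Nat.pow_le_pow_right hp.le hd
  have hpg1 : 1 < p ^ n.gcd e := Nat.one_lt_pow hd0.ne' hp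
  have hpn : p ^ n = p ^ e * p ^ (n - e) := by rw [← pow_add]; congr 1; omega
  have h4 := Nat.le_of_dvd (Nat.mul_pos he (by omega)) h2
  have h5 : e * (p ^ n.gcd e - 1) ≤ (p ^ e - 1) * (p ^ (n - e) - 1) :=
    Nat.mul_le_mul (by omega) (by omega)
  rw [hpn] at h4
  obtain ⟨A, hA⟩ : ∃ A, p ^ e = A + 1 := ⟨p ^ e - 1, by omega⟩
  obtain ⟨B, hB⟩ : ∃ B, p ^ (n - e) = B + 1 := ⟨p ^ (n - e) - 1, by omega⟩
  rw [hA, hB] at h4 h5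
  simp only [Nat.add_sub_cancel] at h5
  have h6 : (A + 1) * (B + 1) - 1 = A * B + A + B := by
    rw [show (A + 1) * (B + 1) = A * B + A + B + 1 by ring]; rfl
  omega

/-- The map `π x = ∑ β ^ i Tr (θ ^ i x)`, `i < e`, with `β` generating `F` and `θ` a generator of
the multiplicative group of `L`. In a common overfield it equals `∑ c_j x ^ (p ^ j)` with
`c_j = ∑ (β θ ^ (p ^ j)) ^ i`, a geometric sum that is nonzero since `θ ^ (e p ^ j) ∉ F`.
As no Frobenius component of `π` is missing, the translates `π (b_j x)` of `π` by an `F_p`-basis of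
`L` are independent over `F`. -/
theorem exists_generic_map [Finite F] {e n : ℕ} (he : 0 < e) (hen : e < n)
    (hF : Module.finrank (ZMod p) F = e) (hL : Module.finrank (ZMod p) L = n)
    (b : Module.Basis (Fin n) (ZMod p) L) :
    ∃ π : L →ₗ[ZMod p] F, Function.Surjective π ∧
      ∀ d : Fin n → F, (∀ w, ∑ j, d j * π (b j * w) = 0) → d = 0 := by
  classical
  obtain ⟨β, -, hβ0, hβ⟩ := exists_power_basis_gen (p := p) (L := F)
  obtain ⟨θ, hθ1, hθ0, hθ⟩ := exists_power_basis_gen (p := p) (L := L)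
  rw [hF] at hβ
  rw [hL] at hθ
  have hcF : Nat.card F = p ^ e := by
    rw [Module.natCard_eq_pow_finrank (K := ZMod p), hF, Nat.card_zmod]
  have hcL : Nat.card L = p ^ n := by
    rw [Module.natCard_eq_pow_finrank (K := ZMod p), hL, Nat.card_zmod]
  rw [hcL] at hθ1
  let π : L →ₗ[ZMod p] F := ∑ i : Fin e, (LinearMap.toSpanSingleton (ZMod p) F (β ^ (i : ℕ))).comp
    ((Algebra.trace (ZMod p) L).comp (LinearMap.mulLeft (ZMod p) (θ ^ (i : ℕ))))
  have hπ : ∀ x, π x = ∑ i : Fin e, Algebra.trace (ZMod p) L (θ ^ (i : ℕ) * x) • β ^ (i : ℕ) := by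
    intro x
    simp [π, LinearMap.sum_apply]
  refine ⟨π, ?_, ?_⟩
  · intro a
    let bF := basisOfLinearIndependentOfCardEqFinrank' (fun i : Fin e => β ^ (i : ℕ)) hβ
      (by simp [hF])
    have hbF : ∀ i, bF i = β ^ (i : ℕ) := fun i => by simp [bF]
    obtain ⟨w, hw⟩ := trace_surjective (p := p) (fun i : Fin e => θ ^ (i : ℕ))
      (hθ.comp (Fin.castLE hen.le) (Fin.castLE_injective hen.le)) (fun i => bF.repr a i)
    refine ⟨w, ?_⟩
    rw [hπ, Finset.sum_congr rfl fun i _ => by rw [hw i, ← hbF i]]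
    exact bF.sum_repr a
  · intro d hd
    suffices key : ∀ (M : Type) [Field M] [Algebra (ZMod p) M] (_ : L →ₐ[ZMod p] M)
        (_ : F →ₐ[ZMod p] M), d = 0 from
      key (AlgebraicClosure (ZMod p)) IsAlgClosed.lift IsAlgClosed.lift
    intro M _ _ φ ψ
    have htr : ∀ x : L, algebraMap (ZMod p) M (Algebra.trace (ZMod p) L x) =
        ∑ j ∈ Finset.range n, φ x ^ p ^ j := by
      intro x
      rw [← φ.commutes, FiniteField.algebraMap_trace_eq_sum_pow, hL, map_sum, Nat.card_zmod]
      simp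
    let c : ℕ → M := fun j => ∑ i ∈ Finset.range e, (ψ β * φ θ ^ p ^ j) ^ i
    have hc : ∀ j, c j ≠ 0 := by
      intro j h0
      have h1 : (ψ β * φ θ ^ p ^ j) ^ e = 1 := by
        have := geom_sum_mul (ψ β * φ θ ^ p ^ j) e
        change c j * _ = _ at this
        rw [h0, zero_mul] at this
        exact (sub_eq_zero.1 this.symm)
      have hβ1 : ψ β ^ (p ^ e - 1) = 1 := by
        have : Fintype F := Fintype.ofFinite F
        have h2 := FiniteField.pow_card_sub_one_eq_one β hβ0
        rw [← Nat.card_eq_fintype_card, hcF] at h2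
        rw [← map_pow, h2, map_one]
      have h3 : φ θ ^ (p ^ j * e * (p ^ e - 1)) = 1 := by
        have h4 := congrArg (· ^ (p ^ e - 1)) h1
        simp only [mul_pow, one_pow] at h4
        rw [← pow_mul, mul_comm e, pow_mul, hβ1, one_pow, one_mul, ← pow_mul, ← pow_mul, ← mul_assoc] at h4
        exact h4
      rw [← map_pow, ← map_one φ] at h3
      exact arith_not_dvd he hen (hθ1 _ (φ.injective h3))
    have hψπ : ∀ x, ψ (π x) = ∑ j ∈ Finset.range n, c j * φ x ^ p ^ j := by
      intro x
      rw [hπ, map_sum]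
      simp only [Algebra.smul_def, map_mul, AlgHom.commutes, htr, c, Finset.sum_mul, map_pow]
      rw [Finset.sum_comm]
      refine Finset.sum_congr rfl fun j _ => ?_
      rw [← Fin.sum_univ_eq_sum_range (fun i => (ψ β * φ θ ^ p ^ j) ^ i * φ x ^ p ^ j)]
      refine Finset.sum_congr rfl fun i _ => ?_
      rw [mul_pow, mul_pow, ← pow_mul, ← pow_mul, mul_comm (p ^ j)]
      ring
    have hcomp := linearized_eq_zero (p := p) hcL (φ : L →+* M)
      (fun j => c j * ∑ k, ψ (d k) * φ (b k) ^ p ^ j) (fun w => by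
        have := congrArg ψ (hd w)
        rw [map_sum, map_zero] at this
        simp only [map_mul, hψπ] at this
        refine Eq.trans ?_ this
        simp only [Finset.mul_sum, Finset.sum_mul]
        rw [Finset.sum_comm]
        refine Finset.sum_congr rfl fun j _ => Finset.sum_congr rfl fun k _ => ?_
        simp only [RingHom.coe_coe]
        ring)
    refine trace_independent (p := p) b d (fun y => (ψ : F →+* M).injective ?_)
    rw [map_zero, map_sum]
    simp only [map_mul, RingHom.coe_coe, AlgHom.commutes, htr, Finset.mul_sum]
    rw [Finset.sum_comm]
    refine Finset.sum_eq_zero fun j hj => ?_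
    have h0 := (mul_eq_zero.1 (hcomp j (Finset.mem_range.1 hj))).resolve_left (hc j)
    calc ∑ k, ψ (d k) * (φ (b k) * φ y) ^ p ^ j
        = (∑ k, ψ (d k) * φ (b k) ^ p ^ j) * φ y ^ p ^ j := by
          rw [Finset.sum_mul]
          refine Finset.sum_congr rfl fun k _ => ?_
          ring
      _ = 0 := by rw [h0, zero_mul]

/-- The form `β v (y, w) = v w + Tr (v y₀)` used when the nonlinear block has only `e` dimensions:
the `F`-linear part of a relation kills `∑ d_j b_j`, and comparing linearised polynomials in `y₀`
kills the coefficient of `y₀`. -/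
theorem trace_block_independent [Finite F] {e m : ℕ} (he : 0 < e)
    (hF : Module.finrank (ZMod p) F = e) (b : Module.Basis (Fin e) (ZMod p) F)
    (d : Fin e → F) (a : Fin (m + 1) → F)
    (h : ∀ (y : Fin (m + 1) → F) (w : F), ∑ j, d j * (b j * w +
      algebraMap (ZMod p) F (Algebra.trace (ZMod p) F (b j * y 0))) + ∑ i, a i * y i = 0) :
    d = 0 := by
  classical
  have hcF : Nat.card F = p ^ e := by
    rw [Module.natCard_eq_pow_finrank (K := ZMod p), hF, Nat.card_zmod]
  have h1 : ∑ j, d j * b j = 0 := by simpa using h 0 1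
  have h2 : ∀ z : F, ∑ j, d j * algebraMap (ZMod p) F (Algebra.trace (ZMod p) F (b j * z))
      + a 0 * z = 0 := by
    intro z
    simpa [Pi.single_apply] using h (Pi.single 0 z) 0
  have h3 := linearized_eq_zero (p := p) hcF (RingHom.id F)
    (fun s => ∑ j, d j * b j ^ p ^ s + if s = 0 then a 0 else 0) (fun z => by
      refine Eq.trans ?_ (h2 z)
      simp only [FiniteField.algebraMap_trace_eq_sum_pow, hF, Nat.card_zmod, add_mul,
        Finset.sum_add_distrib, RingHom.id_apply, Finset.mul_sum, Finset.sum_mul]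
      congr 1
      · rw [Finset.sum_comm]
        refine Finset.sum_congr rfl fun j _ => Finset.sum_congr rfl fun k _ => ?_
        ring
      · rw [Finset.sum_eq_single 0]
        · simp
        · intro s _ hs; simp [hs]
        · intro hh; exact absurd (Finset.mem_range.2 he) hh)
  have ha : a 0 = 0 := by simpa [h1] using h3 0 he
  refine trace_independent (p := p) b d (fun z => ?_)
  simpa [ha] using h2 z

end Fields

/-! ### The three families -/

section Cases

variable {p : ℕ} [Fact p.Prime] {F : Type*} [Field F] [Algebra (ZMod p) F] [Finite F]

/-- The linear case: the nonlinear block is trivial. -/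
theorem exists_gh_linear {e m : ℕ} (he : 1 < e) (het : e ≤ e * m)
    (hF : Module.finrank (ZMod p) F = e) :
    ∃ H : Matrix (Fin (p ^ (e * m))) (Fin (p ^ (e * m))) F,
      IsGH (p ^ (e * m - e)) H ∧ IsNormalized H ∧
      (∃ S : Submodule (ZMod p) (Fin (p ^ (e * m)) → F), ghCode H = S) ∧
      kerDim F (ghCode H) = m + 1 ∧ rankC F (ghCode H) = 1 + m + 0 :=
  exists_gh_of_block (V' := PUnit) (W' := PUnit) he het rfl hF
    (Module.finrank_zero_of_subsingleton)
    (Module.finBasisOfFinrankEq _ _ Module.finrank_zero_of_subsingleton) 0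
    (fun v hv => absurd (Subsingleton.elim v 0) hv) (fun _ _ _ => Subsingleton.elim _ _)

/-- The nonlinear block has `e` dimensions and is coupled to one kernel coordinate. -/
theorem exists_gh_trace {e m : ℕ} (he : 1 < e)
    (hF : Module.finrank (ZMod p) F = e) :
    ∃ H : Matrix (Fin (p ^ (e * (m + 1) + e))) (Fin (p ^ (e * (m + 1) + e))) F,
      IsGH (p ^ (e * (m + 1) + e - e)) H ∧ IsNormalized H ∧
      (∃ S : Submodule (ZMod p) (Fin (p ^ (e * (m + 1) + e)) → F), ghCode H = S) ∧
      kerDim F (ghCode H) = m + 1 + 1 ∧ rankC F (ghCode H) = 1 + (m + 1) + e := by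
  let b := Module.finBasisOfFinrankEq (ZMod p) F hF
  refine exists_gh_of_block (V' := F) (W' := F) he (Nat.le_add_left _ _) rfl hF hF b
    (LinearMap.mk₂ (ZMod p) (fun v x => v * x.2 +
        algebraMap (ZMod p) F (Algebra.trace (ZMod p) F (v * x.1 0)))
      (fun v v' x => by simp [add_mul]; ring)
      (fun c v x => by
        simp only [smul_mul_assoc, map_smul, smul_eq_mul, map_mul]
        simp only [Algebra.smul_def, mul_add])
      (fun v x x' => by simp [mul_add]; ring)
      (fun c v x => by
        simp only [Prod.smul_snd, Prod.smul_fst, Pi.smul_apply, mul_smul_comm,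
          map_smul, smul_eq_mul, map_mul]
        simp only [Algebra.smul_def, mul_add])) ?_ ?_
  · intro v hv a
    exact ⟨v⁻¹ * a, by simp [hv]⟩
  · intro d a h
    exact trace_block_independent (by omega) hF b d a (fun y w => by simpa using h y w)

/-- The nonlinear block is the field with `p ^ n` elements, `n > e`, with the form
`(v, w) ↦ π (v w)`. -/
theorem exists_gh_generic {e m n : ℕ} (he : 1 < e) (hen : e < n)
    (hF : Module.finrank (ZMod p) F = e) :
    ∃ H : Matrix (Fin (p ^ (e * m + n))) (Fin (p ^ (e * m + n))) F,
      IsGH (p ^ (e * m + n - e)) H ∧ IsNormalized H ∧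
      (∃ S : Submodule (ZMod p) (Fin (p ^ (e * m + n)) → F), ghCode H = S) ∧
      kerDim F (ghCode H) = m + 1 ∧ rankC F (ghCode H) = 1 + m + n := by
  have hL : Module.finrank (ZMod p) (GaloisField p n) = n := GaloisField.finrank p (by omega)
  let b := Module.finBasisOfFinrankEq (ZMod p) (GaloisField p n) hL
  obtain ⟨π, hπ, hind⟩ := exists_generic_map (by omega) hen hF hL b
  refine exists_gh_of_block (V' := GaloisField p n) (W' := GaloisField p n) he
    (by omega) rfl hF hL b
    (LinearMap.mk₂ (ZMod p) (fun v x => π (v * x.2))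
      (fun v v' x => by simp [add_mul])
      (fun c v x => by simp)
      (fun v x x' => by simp [mul_add])
      (fun c v x => by simp)) ?_ ?_
  · intro v hv a
    obtain ⟨w, hw⟩ := hπ a
    exact ⟨v⁻¹ * w, by simp [hv, hw]⟩
  · intro d a h
    exact hind d (fun w => by simpa using h 0 w)

end Cases

theorem stmt12 (p e t : ℕ) [Fact p.Prime] (he : 1 < e) (ht : e < t) :
    (∀ k : ℕ, 1 ≤ k → (if e ∣ t then k ≤ t / e + 1 else k ≤ t / e) →
      ∃ H : Matrix (Fin (p ^ t)) (Fin (p ^ t)) (GaloisField p e),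
        IsGH (p ^ (t - e)) H ∧ IsNormalized H ∧ IsFpAdditive p (ghCode H) ∧
        kerDim (GaloisField p e) (ghCode H) = k ∧
        (rankC (GaloisField p e) (ghCode H) : ℤ) =
          1 + t - ((e : ℤ) - 1) * ((k : ℤ) - 1)) ∧
    (∀ H : Matrix (Fin (p ^ t)) (Fin (p ^ t)) (GaloisField p e),
      IsGH (p ^ (t - e)) H → IsNormalized H → IsFpAdditive p (ghCode H) →
      1 ≤ kerDim (GaloisField p e) (ghCode H) ∧
        (if e ∣ t then kerDim (GaloisField p e) (ghCode H) ≤ t / e + 1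
         else kerDim (GaloisField p e) (ghCode H) ≤ t / e)) := by
  classical
  have hF : Module.finrank (ZMod p) (GaloisField p e) = e := GaloisField.finrank p (by omega)
  refine ⟨fun k hk1 hk => ?_, fun H hGH hN hadd => ?_⟩
  · obtain ⟨m, rfl⟩ : ∃ m, k = m + 1 := ⟨k - 1, by omega⟩
    have hle : e * m ≤ t := by
      have h1 : m ≤ t / e := by split_ifs at hk <;> omega
      rw [mul_comm]
      exact (Nat.le_div_iff_mul_le (by omega)).1 h1
    obtain ⟨n, rfl⟩ := Nat.exists_eq_add_of_le hle
    -- it suffices to realise kernel `m + 1` and rank `1 + m + n`, where `t = e m + n`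
    suffices h : ∃ H : Matrix (Fin (p ^ (e * m + n))) (Fin (p ^ (e * m + n))) (GaloisField p e),
        IsGH (p ^ (e * m + n - e)) H ∧ IsNormalized H ∧
        (∃ S : Submodule (ZMod p) (Fin (p ^ (e * m + n)) → GaloisField p e), ghCode H = S) ∧
        kerDim (GaloisField p e) (ghCode H) = m + 1 ∧
        rankC (GaloisField p e) (ghCode H) = 1 + m + n by
      obtain ⟨H, h1, h2, h3, h4, h5⟩ := h
      refine ⟨H, h1, h2, h3, h4, ?_⟩
      rw [h5]
      push_cast
      ring
    have hdiv : (e * m + n) / e = m + n / e := Nat.mul_add_div (by omega) m n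
    have hdvd : e ∣ e * m + n ↔ e ∣ n := Nat.dvd_add_right (dvd_mul_right e m)
    simp only [hdiv, hdvd] at hk
    rcases lt_trichotomy n e with hlt | heq | hgt
    · have h0 : n / e = 0 := Nat.div_eq_of_lt hlt
      have hn : n = 0 := by
        split_ifs at hk with hd
        · exact Nat.eq_zero_of_dvd_of_lt hd hlt
        · omega
      subst hn
      exact exists_gh_linear he (by omega) hF
    · subst heq
      obtain ⟨m, rfl⟩ : ∃ m', m = m' + 1 := by
        rcases m with _ | m
        · simp at ht
        · exact ⟨m, rfl⟩
      exact exists_gh_trace he hF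
    · exact exists_gh_generic he hgt hF
  · obtain ⟨S, hS⟩ := hadd
    have hpos : 0 < p ^ t := pow_pos (Fact.out : p.Prime).pos t
    have hi : ∀ s, H ⟨0, hpos⟩ s = 0 := fun s => hN _ _ (Or.inl rfl)
    have hs : ∀ i, H i ⟨0, hpos⟩ = 0 := fun i => hN _ _ (Or.inr rfl)
    have h1 := one_le_finrank_kerSub hS ⟨0, hpos⟩ hi
    have h2 := kernel_bound (by omega) ht.le (GaloisField.card p e (by omega)) (by simp) hGH
      ⟨0, hpos⟩ ⟨0, hpos⟩ hi hs hS
    rw [hS, kerDim_eq]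
    exact ⟨h1, h2⟩
end

section
/- Let p be a prime, e > 1, q = p^e, and let t > e be an integer that is not a multiple of e; set h = ⌊t/e⌋. For every integer k with 2 ≤ k ≤ h and every integer r with 2h − k + t + e − he ≤ r ≤ 1 + t − (e−1)(k−1), there exists a normalized generalized Hadamard matrix H over F_q of order p^t such that C_H is an F_p-additive code of length p^t with ker(C_H) = k and rank(C_H) = r. -/
/-!
Write `F = GF(p ^ e)`, `t = h * e + s` with `0 < s < e`, `n = h - 1`, `m = h - k`, `N = e + s` and
`L = GF(p ^ N)`. Rows and columns are indexed by `V = F ^ n × L`, which has `p ^ t` elements, and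
the matrix is the table of an `F_p`-bilinear form `V × V → F`,

  `B((u, x), (w, y)) = ∑ i, u i * w i + ∑ u (i - 1) ^ p ^ j * w i ^ p ^ j + ∑_{j < e} γ ^ j * Tr(θ ^ j * x * y)`,

where `γ` and `θ` generate the multiplicative groups of `F` and `L`, and the middle sum is over
chosen pairs `(i, j)` with `1 ≤ i ≤ m` and `1 ≤ j < e`, always including `(i, 1)`.

* The table is generalized Hadamard because `B(v, ·)` is onto for `v ≠ 0` (`form_surjective`): the
  first two sums are triangular in the coordinates, and the powers `θ ^ j`, `j < e`, are
  independent over `F_p`.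
* The last sum contributes the full `N` to the rank and nothing to the kernel. This amounts to the
  injectivity of `a ↦ ∑ γ ^ j * a(θ ^ j * ·)` on additive maps `L → F` (`twisted_sum_injective`),
  which holds as `θ ^ (e * (p ^ e - 1)) ≠ 1`.
* Since the Frobenius powers of a coordinate are independent functions, the code spans `1`, the
  `w i`, the chosen monomials `w i ^ p ^ j` and `N` trace functions (`rankC_ghMatrix`). The number
  of chosen monomials can be anything from `m` to `m * (e - 1)`, which gives all prescribed ranks.
* The terms `u (i - 1) ^ p * w i ^ p` exclude the first `m` coordinates from the kernel, which is
  spanned by `1` and the other `n - m = k - 1` coordinate functions (`kerDim_ghMatrix`). As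
  `k ≥ 2`, the index `i = m` needed for the last of these terms exists.
-/

open scoped BigOperators

/-! ### Finite fields and the form on `L` -/

section Fields

/-- A finite field has a generator of its multiplicative group; such a generator also has a
minimal polynomial of full degree over the prime field. -/
lemma exists_generator (p : ℕ) [Fact p.Prime] (K : Type*) [Field K] [Finite K]
    [Algebra (ZMod p) K] :
    ∃ g : K, orderOf g = Nat.card K - 1 ∧
      (minpoly (ZMod p) g).natDegree = Module.finrank (ZMod p) K := by
  obtain ⟨g, hg⟩ := IsCyclic.exists_generator (α := Kˣ)
  refine ⟨g, ?_, ?_⟩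
  · rw [orderOf_units, orderOf_eq_card_of_forall_mem_zpowers hg, Nat.card_units]
  · rw [← Field.primitive_element_iff_minpoly_natDegree_eq, eq_top_iff]
    intro x _
    by_cases hx : x = 0
    · rw [hx]; exact zero_mem _
    · obtain ⟨k, hk⟩ := hg (Units.mk0 x hx)
      have : x = (g : K) ^ k := by
        have := congrArg Units.val hk
        simpa using this.symm
      rw [this]
      exact zpow_mem (IntermediateField.mem_adjoin_simple_self _ _) k

/-- The Frobenius powers `x ↦ x ^ p ^ j`, `j < e`, are linearly independent functions on a field
containing an element of order `p ^ e - 1`. -/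
lemma frobenius_indep {p e : ℕ} [Fact p.Prime] {F : Type*} [Field F] (he : 1 < e) {γ : F}
    (hγ : orderOf γ = p ^ e - 1) (c : Fin e → F)
    (h : ∀ x : F, ∑ j, c j * x ^ p ^ (j : ℕ) = 0) (j : Fin e) : c j = 0 := by
  have hp := (Fact.out : p.Prime)
  have hinj : Function.Injective (fun j : Fin e => (powMonoidHom (p ^ (j : ℕ)) : F →* F)) := by
    intro a b hab
    have h1 : γ ^ p ^ (a : ℕ) = γ ^ p ^ (b : ℕ) := DFunLike.congr_fun hab γ
    have hlt : ∀ a : Fin e, p ^ (a : ℕ) ∈ Set.Iio (orderOf γ) := by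
      intro a
      rw [hγ, Set.mem_Iio]
      have h2 : p ^ (a : ℕ) ≤ p ^ (e - 1) := Nat.pow_le_pow_right hp.pos (by omega)
      have h3 : p ^ e = p * p ^ (e - 1) := by
        rw [← pow_succ']; congr 1; omega
      have h4 : 2 ≤ p := hp.two_le
      have h5 : p ^ 1 ≤ p ^ (e - 1) := Nat.pow_le_pow_right hp.pos (by omega)
      rw [pow_one] at h5
      have h6 : 2 * p ^ (e - 1) ≤ p * p ^ (e - 1) := Nat.mul_le_mul_right _ h4
      omega
    have h3 := pow_injOn_Iio_orderOf (hlt a) (hlt b) h1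
    exact Fin.ext (Nat.pow_right_injective hp.two_le h3)
  have hli := (linearIndependent_monoidHom F F).comp _ hinj
  rw [Fintype.linearIndependent_iff] at hli
  refine hli c ?_ j
  funext x
  simpa using h x

variable {p : ℕ} [Fact p.Prime] {F L : Type*} [Field F] [Field L]

/-- Injectivity of the twisted sum: multiplying the relation by `γ` and shifting telescopes it to
`γ ^ e * a (θ ^ e * x) = a x`; iterating until the power of `γ` disappears shows that `a` kills
the multiples of `θ ^ (e * M) - 1`. -/
lemma twisted_sum_injective {e M : ℕ} {γ : F} {θ : L} (hγ : γ ^ M = 1)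
    (hθ : θ ^ (e * M) ≠ 1) (a : L →+ F)
    (h : ∀ x, ∑ j ∈ Finset.range e, γ ^ j * a (θ ^ j * x) = 0) (x : L) : a x = 0 := by
  have h1 : ∀ x, γ ^ e * a (θ ^ e * x) = a x := by
    intro x
    have h2 := Finset.sum_range_succ' (fun j => γ ^ j * a (θ ^ j * x)) e
    rw [Finset.sum_range_succ, h x] at h2
    have h3 : ∑ k ∈ Finset.range e, γ ^ (k + 1) * a (θ ^ (k + 1) * x) = 0 := by
      have := h (θ * x)
      calc _ = γ * ∑ j ∈ Finset.range e, γ ^ j * a (θ ^ j * (θ * x)) := by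
            rw [Finset.mul_sum]
            refine Finset.sum_congr rfl fun k _ => ?_
            rw [pow_succ, pow_succ, mul_assoc (θ ^ k)]; ring
        _ = 0 := by rw [this, mul_zero]
    rw [h3] at h2
    simpa using h2
  have h4 : ∀ i x, (γ ^ e) ^ i * a ((θ ^ e) ^ i * x) = a x := by
    intro i
    induction i with
    | zero => simp
    | succ i ih =>
      intro x
      rw [← h1 x, ← ih (θ ^ e * x), pow_succ, pow_succ, mul_assoc ((θ ^ e) ^ i)]
      ring
  have h5 : ∀ x, a ((θ ^ (e * M) - 1) * x) = 0 := by
    intro x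
    have := h4 M x
    rw [← pow_mul, mul_comm e M, pow_mul, hγ, one_pow, one_mul, ← pow_mul] at this
    rw [sub_mul, one_mul, map_sub, this, sub_self]
  have h6 := h5 ((θ ^ (e * M) - 1)⁻¹ * x)
  rwa [mul_inv_cancel_left₀ (sub_ne_zero.2 hθ)] at h6

/-- The gcd of `p ^ N - 1` and `p ^ e - 1` is `p ^ gcd N e - 1`, which is too small for a
generator `θ` of a field with `p ^ N` elements to satisfy `θ ^ (e * (p ^ e - 1)) = 1`. -/
lemma generator_pow_ne_one {e N : ℕ} (he : 1 < e) (hN : e < N) {θ : L}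
    (hθ : orderOf θ = p ^ N - 1) : θ ^ (e * (p ^ e - 1)) ≠ 1 := by
  have hp := (Fact.out : p.Prime)
  intro h
  have h1 : p ^ N - 1 ∣ e * (p ^ e - 1) := hθ ▸ orderOf_dvd_of_pow_eq_one h
  have h2 : p ^ N - 1 ∣ e * (p ^ (Nat.gcd N e) - 1) := by
    rw [← Nat.pow_sub_one_gcd_pow_sub_one, ← Nat.gcd_mul_left]
    exact Nat.dvd_gcd (Dvd.intro_left _ rfl) h1
  have hd : Nat.gcd N e ≤ N - e :=
    Nat.le_of_dvd (by omega) (Nat.dvd_sub (Nat.gcd_dvd_left _ _) (Nat.gcd_dvd_right _ _))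
  have hd0 : 0 < Nat.gcd N e := Nat.gcd_pos_of_pos_right _ (by omega)
  set d := Nat.gcd N e
  have h3 : p ^ e * p ^ d ≤ p ^ N := by
    rw [← pow_add]; exact Nat.pow_le_pow_right hp.pos (by omega)
  have h4 : e < p ^ e := Nat.lt_pow_self hp.one_lt
  have h5 : p ^ 1 ≤ p ^ d := Nat.pow_le_pow_right hp.pos hd0
  rw [pow_one] at h5
  have h6 : 2 ≤ p := hp.two_le
  have h7 := Nat.le_of_dvd (Nat.mul_pos (by omega) (by omega)) h2
  obtain ⟨y, hy⟩ : ∃ y, p ^ d = y + 2 := ⟨p ^ d - 2, by omega⟩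
  have h8 : (e + 1) * p ^ d ≤ p ^ e * p ^ d := Nat.mul_le_mul_right _ h4
  rw [hy] at h8 h7 h3
  have : y + 2 - 1 = y + 1 := by omega
  rw [this] at h7
  have : (e + 1) * (y + 2) = e * (y + 1) + e + y + 2 := by ring
  omega

variable [Algebra (ZMod p) F] [Algebra (ZMod p) L]

/-- The `F`-valued `F_p`-bilinear form `(x, y) ↦ ∑_{j < e} γ ^ j * Tr (θ ^ j * x * y)` on `L`. -/
noncomputable def fieldForm (p : ℕ) [Fact p.Prime] {F L : Type*} [Field F] [Field L]
    [Algebra (ZMod p) F] [Algebra (ZMod p) L] (e : ℕ) (γ : F) (θ x y : L) : F :=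
  ∑ j ∈ Finset.range e,
    γ ^ j * algebraMap (ZMod p) F (Algebra.trace (ZMod p) L (θ ^ j * x * y))

lemma fieldForm_add_left (e : ℕ) (γ : F) (θ x x' y : L) :
    fieldForm p e γ θ (x + x') y = fieldForm p e γ θ x y + fieldForm p e γ θ x' y := by
  simp [fieldForm, mul_add, add_mul, Finset.sum_add_distrib]

lemma fieldForm_add_right (e : ℕ) (γ : F) (θ x y y' : L) :
    fieldForm p e γ θ x (y + y') = fieldForm p e γ θ x y + fieldForm p e γ θ x y' := by
  simp [fieldForm, mul_add, Finset.sum_add_distrib]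

@[simp] lemma fieldForm_zero_left (e : ℕ) (γ : F) (θ y : L) : fieldForm p e γ θ 0 y = 0 := by
  simp [fieldForm]

@[simp] lemma fieldForm_zero_right (e : ℕ) (γ : F) (θ x : L) : fieldForm p e γ θ x 0 = 0 := by
  simp [fieldForm]

lemma trace_mul_eq_zero [Finite L] {x : L}
    (h : ∀ y, Algebra.trace (ZMod p) L (x * y) = 0) : x = 0 :=
  (traceForm_nondegenerate (ZMod p) L).1 x (by simpa [Algebra.traceForm_apply] using h)

/-- A functional vanishing on the image of `fieldForm x` gives an `F_p`-relation between the
powers of `θ` below its degree. -/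
lemma fieldForm_surjective [Finite F] [Finite L] {e N : ℕ} (hN : e < N) {γ : F} {θ : L}
    (hγ : (minpoly (ZMod p) γ).natDegree = e) (hF : Module.finrank (ZMod p) F = e)
    (hθ : (minpoly (ZMod p) θ).natDegree = N) {x : L} (hx : x ≠ 0) :
    Function.Surjective (fieldForm p e γ θ x) := by
  let f : L →+ F := AddMonoidHom.mk' (fieldForm p e γ θ x) (fieldForm_add_right e γ θ x)
  let R : Submodule (ZMod p) F := AddSubgroup.toZModSubmodule p f.range
  suffices hR : R = ⊤ by
    intro z
    have hz : z ∈ R := hR ▸ Submodule.mem_top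
    obtain ⟨y, hy⟩ := hz
    exact ⟨y, hy⟩
  by_contra hne
  obtain ⟨μ, hμ, hker⟩ := Submodule.exists_le_ker_of_lt_top R (lt_top_iff_ne_top.2 hne)
  apply hμ
  have h1 : (∑ j ∈ Finset.range e, μ (γ ^ j) • θ ^ j) * x = 0 := by
    apply trace_mul_eq_zero (p := p)
    intro y
    have h2 : μ (fieldForm p e γ θ x y) = 0 := hker ⟨y, rfl⟩
    rw [← h2, fieldForm, map_sum, Finset.sum_mul, Finset.sum_mul, map_sum]
    refine Finset.sum_congr rfl fun j _ => ?_
    rw [smul_mul_assoc, smul_mul_assoc, map_smul, mul_comm (γ ^ j), ← Algebra.smul_def, map_smul,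
      smul_eq_mul, smul_eq_mul, mul_comm]
  have h3 := (mul_eq_zero.1 h1).resolve_right hx
  have hli : LinearIndependent (ZMod p) (fun i : Fin e => θ ^ (i : ℕ)) := by
    have := linearIndependent_pow (K := ZMod p) θ
    exact this.comp (fun i : Fin e => (⟨i, by omega⟩ : Fin (minpoly (ZMod p) θ).natDegree))
      (fun a b hab => by simpa [Fin.ext_iff] using hab)
  rw [Fintype.linearIndependent_iff] at hli
  have h4 := hli (fun i => μ (γ ^ (i : ℕ)))
    (by rw [Fin.sum_univ_eq_sum_range (fun i => μ (γ ^ i) • θ ^ i)]; exact h3)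
  have hspan := (linearIndependent_pow (K := ZMod p) γ).span_eq_top_of_card_eq_finrank'
    (by simp [hγ, hF])
  refine LinearMap.ext_on_range hspan fun i => ?_
  simpa using h4 ⟨i, by omega⟩

end Fields

/-! ### The bilinear form on `F ^ n × L` -/

section Form

variable {p e n : ℕ} [Fact p.Prime] {F L : Type*} [Field F] [Field L]

/-- The index of the row coordinate multiplying the column monomial `w i ^ p ^ j`: it is `i`
itself if `j = 0` and the preceding index `i - 1` otherwise (with `0 - 1 = 0`). -/
def src (i : Fin n) (j : Fin e) : Fin n :=
  if (j : ℕ) = 0 then i else ⟨(i : ℕ) - 1, by omega⟩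

/-- The coefficient of the monomial `w i ^ p ^ j` in the form attached to `T`. -/
def coeff (p : ℕ) (T : Finset (Fin n × Fin e)) (u : Fin n → F) (i : Fin n) (j : Fin e) : F :=
  if (i, j) ∈ T then u (src i j) ^ p ^ (j : ℕ) else 0

/-- The admissible sets of monomials `w i ^ p ^ j`: all the linear ones are present, nonlinear
ones only occur for `1 ≤ i ≤ m`, and for each of these `i` the monomial `w i ^ p` is present. -/
structure Admissible (m : ℕ) (T : Finset (Fin n × Fin e)) : Prop where
  lin : ∀ (i : Fin n) (j : Fin e), (j : ℕ) = 0 → (i, j) ∈ T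
  range : ∀ (i : Fin n) (j : Fin e), (i, j) ∈ T → (j : ℕ) ≠ 0 → 1 ≤ (i : ℕ) ∧ (i : ℕ) ≤ m
  frob : ∀ (i : Fin n) (j : Fin e), (j : ℕ) = 1 → 1 ≤ (i : ℕ) → (i : ℕ) ≤ m → (i, j) ∈ T

lemma src_inj {m : ℕ} {T : Finset (Fin n × Fin e)} (hT : Admissible m T) {i i' : Fin n}
    {j : Fin e} (h : (i, j) ∈ T) (h' : (i', j) ∈ T) (hs : src i j = src i' j) : i = i' := by
  unfold src at hs
  split_ifs at hs with hj
  · exact hs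
  · have h1 := hT.range i j h hj
    have h2 := hT.range i' j h' hj
    simp only [Fin.mk.injEq] at hs
    exact Fin.ext (by omega)

@[simp] lemma coeff_zero (T : Finset (Fin n × Fin e)) (i : Fin n) (j : Fin e) :
    coeff p T (0 : Fin n → F) i j = 0 := by
  have hp := (Fact.out : p.Prime)
  simp [coeff, hp.ne_zero]

lemma coeff_of_vanish {m : ℕ} {T : Finset (Fin n × Fin e)} (hT : Admissible m T)
    {u : Fin n → F} (hu : ∀ i : Fin n, (i : ℕ) < m → u i = 0) (i : Fin n) (j : Fin e) :
    coeff p T u i j = if (j : ℕ) = 0 then u i else 0 := by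
  have hp := (Fact.out : p.Prime)
  unfold coeff
  split_ifs with h hj hj
  · simp [src, hj]
  · have := hT.range i j h hj
    rw [src, if_neg hj, hu _ (by simp only; omega)]
    simp [hp.ne_zero]
  · exact absurd (hT.lin i j hj) h
  · rfl

lemma coeff_add [CharP F p] (T : Finset (Fin n × Fin e)) (u u' : Fin n → F) (i : Fin n)
    (j : Fin e) : coeff p T (u + u') i j = coeff p T u i j + coeff p T u' i j := by
  unfold coeff
  split_ifs
  · simp [add_pow_char_pow]
  · simp

lemma sum_single (f : Fin n → Fin e → F) (i : Fin n) (c : F) :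
    ∑ i', ∑ j, f i' j * (Pi.single i c : Fin n → F) i' ^ p ^ (j : ℕ)
      = ∑ j, f i j * c ^ p ^ (j : ℕ) := by
  have hp := (Fact.out : p.Prime)
  rw [Finset.sum_eq_single i]
  · simp
  · intro i' _ hi
    simp [Pi.single_eq_of_ne hi, hp.ne_zero]
  · simp

variable [Algebra (ZMod p) F] [Algebra (ZMod p) L]

/-- The `F_p`-bilinear form on `F ^ n × L` whose table is the generalized Hadamard matrix. -/
noncomputable def form (p : ℕ) [Fact p.Prime] {F L : Type*} [Field F] [Field L]
    [Algebra (ZMod p) F] [Algebra (ZMod p) L] (T : Finset (Fin n × Fin e)) (γ : F) (θ : L)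
    (u w : (Fin n → F) × L) : F :=
  ∑ i, ∑ j, coeff p T u.1 i j * w.1 i ^ p ^ (j : ℕ) + fieldForm p e γ θ u.2 w.2

variable (T : Finset (Fin n × Fin e)) (γ : F) (θ : L)

lemma form_add_left [CharP F p] (u u' w : (Fin n → F) × L) :
    form p T γ θ (u + u') w = form p T γ θ u w + form p T γ θ u' w := by
  simp only [form, Prod.fst_add, Prod.snd_add, coeff_add, fieldForm_add_left, add_mul,
    Finset.sum_add_distrib]
  ring

lemma form_add_right [CharP F p] (u w w' : (Fin n → F) × L) :
    form p T γ θ u (w + w') = form p T γ θ u w + form p T γ θ u w' := by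
  simp only [form, Prod.fst_add, Prod.snd_add, Pi.add_apply, add_pow_char_pow,
    fieldForm_add_right, mul_add, Finset.sum_add_distrib]
  ring

@[simp] lemma form_zero_left (w : (Fin n → F) × L) : form p T γ θ 0 w = 0 := by
  simp [form]

@[simp] lemma form_zero_right (u : (Fin n → F) × L) : form p T γ θ u 0 = 0 := by
  have hp := (Fact.out : p.Prime)
  simp [form, hp.ne_zero]

lemma form_inr (u : (Fin n → F) × L) (y : L) :
    form p T γ θ u (0, y) = fieldForm p e γ θ u.2 y := by
  have hp := (Fact.out : p.Prime)
  simp [form, hp.ne_zero]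

lemma form_single (u : (Fin n → F) × L) (i : Fin n) (c : F) :
    form p T γ θ u (Pi.single i c, 0) = ∑ j, coeff p T u.1 i j * c ^ p ^ (j : ℕ) := by
  simp only [form, fieldForm_zero_right, add_zero]
  exact sum_single _ i c

/-- If `u` has a nonzero coordinate in `F ^ n`, then at the first such coordinate `i` the form is
`c ↦ u i * c`, as the nonlinear terms there only involve the preceding coordinate of `u`. -/
lemma form_surjective [Finite F] [Finite L] {N m : ℕ} (he : 1 < e) (hN : e < N)
    (hT : Admissible m T) {γ : F} {θ : L}
    (hγ : (minpoly (ZMod p) γ).natDegree = e) (hF : Module.finrank (ZMod p) F = e)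
    (hθ : (minpoly (ZMod p) θ).natDegree = N) {u : (Fin n → F) × L} (hu : u ≠ 0) :
    Function.Surjective (form p T γ θ u) := by
  have hp := (Fact.out : p.Prime)
  intro z
  by_cases h2 : u.2 = 0
  · have h1 : ∃ i, u.1 i ≠ 0 := by
      by_contra! h
      exact hu (Prod.ext (funext h) h2)
    obtain ⟨i, hi, hmin⟩ := wellFounded_lt.has_min {i | u.1 i ≠ 0} h1
    refine ⟨(Pi.single i ((u.1 i)⁻¹ * z), 0), ?_⟩
    rw [form_single, Finset.sum_eq_single (⟨0, by omega⟩ : Fin e)]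
    · have : (i, (⟨0, by omega⟩ : Fin e)) ∈ T := hT.lin _ _ rfl
      simp only [coeff, if_pos this, src, if_true, pow_zero, pow_one]
      exact mul_inv_cancel_left₀ hi z
    · intro j _ hj
      have hj0 : (j : ℕ) ≠ 0 := fun h => hj (Fin.ext h)
      unfold coeff
      split_ifs with hm
      · have h3 := hT.range i j hm hj0
        have h4 : u.1 (src i j) = 0 := by
          by_contra h5
          refine hmin _ h5 ?_
          rw [src, if_neg hj0, Fin.lt_def]
          simp only
          omega
        simp [h4, hp.ne_zero]
      · simp
    · simp
  · obtain ⟨y, hy⟩ := fieldForm_surjective hN hγ hF hθ h2 z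
    exact ⟨(0, y), by rw [form_inr, hy]⟩

end Form

/-! ### The code: Hadamard property, rank and kernel -/

section Code

variable {p e n : ℕ} [Fact p.Prime] {F L : Type*} [Field F] [Field L]
  [Algebra (ZMod p) F] [Algebra (ZMod p) L]
  {ι : Type*} (ε : ι ≃ (Fin n → F) × L) (T : Finset (Fin n × Fin e)) (γ : F) (θ : L)

/-- The table of `form`, with rows and columns labelled by `ι` through `ε`. -/
noncomputable def ghMatrix (p : ℕ) [Fact p.Prime] {F L : Type*} [Field F] [Field L]
    [Algebra (ZMod p) F] [Algebra (ZMod p) L] {ι : Type*} (ε : ι ≃ (Fin n → F) × L)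
    (T : Finset (Fin n × Fin e)) (γ : F) (θ : L) : Matrix ι ι F :=
  fun i s => form p T γ θ (ε i) (ε s)

lemma mem_code {v : ι → F} : v ∈ ghCode (ghMatrix p ε T γ θ) ↔
    ∃ (u : (Fin n → F) × L) (α : F), v = fun s => form p T γ θ u (ε s) + α := by
  constructor
  · rintro ⟨i, α, rfl⟩
    exact ⟨ε i, α, rfl⟩
  · rintro ⟨u, α, rfl⟩
    exact ⟨ε.symm u, α, by simp [ghMatrix]⟩

lemma isGH_ghMatrix [CharP F p] [Finite F] [Finite L] {N m : ℕ} (he : 1 < e) (hN : e < N)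
    (hT : Admissible m T) {γ : F} {θ : L}
    (hγ : (minpoly (ZMod p) γ).natDegree = e) (hF : Module.finrank (ZMod p) F = e)
    (hθ : (minpoly (ZMod p) θ).natDegree = N) {lam : ℕ}
    (hlam : Nat.card ι = lam * Nat.card F) :
    IsGH lam (ghMatrix p ε T γ θ) := by
  intro i j hij a
  have hne : ε i - ε j ≠ 0 := sub_ne_zero.2 fun h => hij (ε.injective h)
  let f : (Fin n → F) × L →+ F :=
    AddMonoidHom.mk' (form p T γ θ (ε i - ε j)) (form_add_right T γ θ _)
  have hf : Function.Surjective f := form_surjective T he hN hT hγ hF hθ hne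
  have hsub : ∀ w, form p T γ θ (ε i) w - form p T γ θ (ε j) w = f w := by
    intro w
    have := form_add_left T γ θ (ε i - ε j) (ε j) w
    rw [sub_add_cancel] at this
    rw [this, add_sub_cancel_right]; rfl
  obtain ⟨w₀, hw₀⟩ := hf a
  -- the fibre over `a` is a translate of the kernel
  have e1 : {s : ι // ghMatrix p ε T γ θ i s - ghMatrix p ε T γ θ j s = a} ≃ f.ker :=
    { toFun := fun s => ⟨ε s.1 - w₀, by
        have h := s.2
        simp only [ghMatrix, hsub] at h
        rw [AddMonoidHom.mem_ker, map_sub, h, hw₀, sub_self]⟩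
      invFun := fun w => ⟨ε.symm (w.1 + w₀), by
        have h : f w.1 = 0 := w.2
        simp only [ghMatrix, hsub, Equiv.apply_symm_apply, map_add, hw₀, h, zero_add]⟩
      left_inv := fun s => by simp
      right_inv := fun w => by simp }
  rw [Nat.card_congr e1]
  have h1 := AddSubgroup.card_mul_index f.ker
  rw [AddSubgroup.index_ker, AddMonoidHom.range_eq_top.2 hf] at h1
  have h2 : Nat.card (⊤ : AddSubgroup F) = Nat.card F := Nat.card_congr AddSubgroup.topEquiv.toEquiv
  rw [h2, ← Nat.card_congr ε, hlam] at h1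
  exact Nat.eq_of_mul_eq_mul_right Nat.card_pos h1

/-- The code of `ghMatrix` as an additive group. -/
noncomputable def codeGroup (p : ℕ) [Fact p.Prime] {F L : Type*} [Field F] [Field L]
    [Algebra (ZMod p) F] [Algebra (ZMod p) L] [CharP F p] {ι : Type*}
    (ε : ι ≃ (Fin n → F) × L) (T : Finset (Fin n × Fin e)) (γ : F) (θ : L) :
    AddSubgroup (ι → F) where
  carrier := ghCode (ghMatrix p ε T γ θ)
  zero_mem' := (mem_code ε T γ θ).2 ⟨0, 0, by funext s; simp⟩
  add_mem' := by
    intro a b ha hb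
    obtain ⟨u, α, rfl⟩ := (mem_code ε T γ θ).1 ha
    obtain ⟨u', α', rfl⟩ := (mem_code ε T γ θ).1 hb
    refine (mem_code ε T γ θ).2 ⟨u + u', α + α', ?_⟩
    funext s
    simp only [Pi.add_apply, form_add_left]
    ring
  neg_mem' := by
    intro a ha
    obtain ⟨u, α, rfl⟩ := (mem_code ε T γ θ).1 ha
    refine (mem_code ε T γ θ).2 ⟨-u, -α, ?_⟩
    funext s
    have h := form_add_left T γ θ u (-u) (ε s)
    rw [add_neg_cancel, form_zero_left] at h
    rw [Pi.neg_apply]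
    linear_combination h

lemma mem_kerSet [CharP F p] {x : ι → F} : x ∈ kerSet (ghCode (ghMatrix p ε T γ θ)) ↔
    ∀ α : F, α • x ∈ ghCode (ghMatrix p ε T γ θ) := by
  have hC : ghCode (ghMatrix p ε T γ θ) = (codeGroup p ε T γ θ : Set (ι → F)) := rfl
  constructor
  · intro h α
    rw [← h α]
    exact ⟨0, (codeGroup p ε T γ θ).zero_mem, by simp⟩
  · intro h α
    have h1 := h α
    rw [hC] at h1 ⊢
    ext v
    constructor
    · rintro ⟨c, hc, rfl⟩
      exact add_mem h1 hc
    · intro hv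
      exact ⟨v - α • x, sub_mem hv h1, by simp⟩

/-- The function `s ↦ Tr (z * y)`, where `y` is the `L`-component of the column `s`. -/
noncomputable def traceFun (p : ℕ) [Fact p.Prime] {F L : Type*} [Field F] [Field L]
    [Algebra (ZMod p) F] [Algebra (ZMod p) L] {ι : Type*} (ε : ι ≃ (Fin n → F) × L) (z : L) :
    ι → F :=
  fun s => algebraMap (ZMod p) F (Algebra.trace (ZMod p) L (z * (ε s).2))

/-- The functions in terms of which all codewords are expressed: the monomials `w i ^ p ^ j`, the
functions `Tr (b l * y)` for a basis `b` of `L` over `F_p`, and the constant `1`. -/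
noncomputable def gen (p e : ℕ) [Fact p.Prime] {F L : Type*} [Field F] [Field L]
    [Algebra (ZMod p) F] [Algebra (ZMod p) L] {ι κ : Type*} (ε : ι ≃ (Fin n → F) × L)
    (b : κ → L) : (Fin n × Fin e) ⊕ (κ ⊕ Unit) → ι → F
  | Sum.inl ij => fun s => (ε s).1 ij.1 ^ p ^ (ij.2 : ℕ)
  | Sum.inr (Sum.inl l) => traceFun p ε (b l)
  | Sum.inr (Sum.inr _) => 1

lemma codeword_eq {κ : Type*} (b : κ → L) (u : (Fin n → F) × L) (α : F) :
    (fun s => form p T γ θ u (ε s) + α) =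
      ∑ i, ∑ j, coeff p T u.1 i j • gen p e ε b (Sum.inl (i, j))
        + ∑ j ∈ Finset.range e, γ ^ j • traceFun p ε (θ ^ j * u.2)
        + α • gen p e ε b (Sum.inr (Sum.inr ())) := by
  funext s
  simp [form, fieldForm, gen, traceFun]

lemma traceFun_add (z z' : L) :
    (traceFun p ε (z + z') : ι → F) = traceFun p ε z + traceFun p ε z' := by
  funext s
  simp [traceFun, add_mul]

lemma traceFun_mem {κ : Type*} [Fintype κ] (b : Module.Basis κ (ZMod p) L) (z : L)
    (S : Submodule F (ι → F)) (hS : ∀ l, traceFun p ε (b l) ∈ S) : traceFun p ε z ∈ S := by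
  have h : (traceFun p ε z : ι → F) =
      ∑ l, algebraMap (ZMod p) F (b.repr z l) • traceFun p ε (b l) := by
    funext s
    have hz : Algebra.trace (ZMod p) L (z * (ε s).2) =
        ∑ l, b.repr z l * Algebra.trace (ZMod p) L (b l * (ε s).2) := by
      conv_lhs => rw [← b.sum_repr z]
      rw [Finset.sum_mul, map_sum]
      exact Finset.sum_congr rfl fun l _ => by rw [smul_mul_assoc, map_smul, smul_eq_mul]
    simp only [traceFun, hz, map_sum, map_mul, Finset.sum_apply, Pi.smul_apply, smul_eq_mul]
  rw [h]
  exact Submodule.sum_mem _ fun l _ => Submodule.smul_mem _ _ (hS l)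

lemma linearIndependent_gen [Finite L] (he : 1 < e) {γ : F} (hγ : orderOf γ = p ^ e - 1)
    {κ : Type*} [Fintype κ] [DecidableEq κ] (b : Module.Basis κ (ZMod p) L) :
    LinearIndependent F (gen p e ε b) := by
  have hp := (Fact.out : p.Prime)
  rw [Fintype.linearIndependent_iff]
  intro c hc
  have hev : ∀ w : (Fin n → F) × L,
      ∑ i, ∑ j, c (Sum.inl (i, j)) * w.1 i ^ p ^ (j : ℕ) +
        (∑ l, c (Sum.inr (Sum.inl l)) *
          algebraMap (ZMod p) F (Algebra.trace (ZMod p) L (b l * w.2)) +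
        c (Sum.inr (Sum.inr ()))) = 0 := by
    intro w
    have := congrFun hc (ε.symm w)
    simpa [gen, traceFun, Fintype.sum_sum_type, Fintype.sum_prod_type] using this
  have h1 : c (Sum.inr (Sum.inr ())) = 0 := by
    simpa [hp.ne_zero] using hev 0
  have h2 : ∀ l, c (Sum.inr (Sum.inl l)) = 0 := by
    intro l
    -- pair with the basis dual to `b` for the trace form
    have hnd := traceForm_nondegenerate (ZMod p) L
    have hd : ∀ k, Algebra.trace (ZMod p) L
        (b k * (LinearMap.BilinForm.dualBasis (Algebra.traceForm (ZMod p) L) hnd b) l)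
          = if k = l then 1 else 0 := by
      intro k
      rw [mul_comm, ← Algebra.traceForm_apply]
      exact LinearMap.BilinForm.apply_dualBasis_left hnd b l k
    have := hev (0, (LinearMap.BilinForm.dualBasis (Algebra.traceForm (ZMod p) L) hnd b) l)
    simpa [hp.ne_zero, h1, hd] using this
  have h3 : ∀ i j, c (Sum.inl (i, j)) = 0 := by
    intro i j
    refine frobenius_indep he hγ (fun j => c (Sum.inl (i, j))) (fun x => ?_) j
    have := hev (Pi.single i x, 0)
    simp only [h1, h2, zero_mul, Finset.sum_const_zero, add_zero] at this
    rwa [sum_single (fun i j => c (Sum.inl (i, j)))] at this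
  rintro (⟨i, j⟩ | l | ⟨⟩)
  exacts [h3 i j, h2 l, h1]

/-- The span of the code is generated by the monomials in `T`, all trace functions and `1`: a
functional vanishing on the code vanishes on each of these, by independence of the Frobenius powers
of a row coordinate for the monomials, and by `twisted_sum_injective` for the trace functions. -/
lemma rankC_ghMatrix [CharP F p] [Finite L] {m N : ℕ} (he : 1 < e) (hN : e < N)
    (hT : Admissible m T) {γ : F} {θ : L} (hγ : orderOf γ = p ^ e - 1)
    (hθ : orderOf θ = p ^ N - 1) (hL : Module.finrank (ZMod p) L = N) :
    rankC F (ghCode (ghMatrix p ε T γ θ)) = T.card + N + 1 := by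
  classical
  let b := Module.finBasis (ZMod p) L
  let emb : T ⊕ (Fin (Module.finrank (ZMod p) L) ⊕ Unit) →
      (Fin n × Fin e) ⊕ (Fin (Module.finrank (ZMod p) L) ⊕ Unit) := Sum.map Subtype.val id
  have hemb : Function.Injective emb :=
    Sum.map_injective.2 ⟨Subtype.val_injective, Function.injective_id⟩
  have hli := (linearIndependent_gen ε he hγ b).comp emb hemb
  have hspan : Submodule.span F (ghCode (ghMatrix p ε T γ θ)) =
      Submodule.span F (Set.range (gen p e ε b ∘ emb)) := by
    have hmem : ∀ k, gen p e ε b (emb k) ∈ Submodule.span F (Set.range (gen p e ε b ∘ emb)) :=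
      fun k => Submodule.subset_span ⟨k, rfl⟩
    apply le_antisymm
    · rw [Submodule.span_le]
      intro v hv
      obtain ⟨u, α, rfl⟩ := (mem_code ε T γ θ).1 hv
      rw [codeword_eq ε T γ θ b]
      refine Submodule.add_mem _ (Submodule.add_mem _ ?_ ?_) ?_
      · refine Submodule.sum_mem _ fun i _ => Submodule.sum_mem _ fun j _ => ?_
        by_cases hij : (i, j) ∈ T
        · exact Submodule.smul_mem _ _ (hmem (Sum.inl ⟨(i, j), hij⟩))
        · simp [coeff, hij]
      · refine Submodule.sum_mem _ fun j _ => Submodule.smul_mem _ _ ?_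
        exact traceFun_mem ε b _ _ fun l => hmem (Sum.inr (Sum.inl l))
      · exact Submodule.smul_mem _ _ (hmem (Sum.inr (Sum.inr ())))
    · rw [Submodule.span_le]
      rintro _ ⟨k, rfl⟩
      by_contra hk
      obtain ⟨φ, hφ, hker⟩ := Submodule.exists_le_ker_of_notMem hk
      apply hφ
      have hev : ∀ (u : (Fin n → F) × L) (α : F),
          ∑ i, ∑ j, coeff p T u.1 i j * φ (gen p e ε b (Sum.inl (i, j)))
          + ∑ j ∈ Finset.range e, γ ^ j * φ (traceFun p ε (θ ^ j * u.2))
          + α * φ (gen p e ε b (Sum.inr (Sum.inr ()))) = 0 := by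
        intro u α
        have h : φ (fun s => form p T γ θ u (ε s) + α) = 0 :=
          hker (Submodule.subset_span ((mem_code ε T γ θ).2 ⟨u, α, rfl⟩))
        rw [codeword_eq ε T γ θ b] at h
        simpa using h
      have htr0 : φ (traceFun p ε (0 : L)) = 0 := by
        have : (traceFun p ε (0 : L) : ι → F) = 0 := by funext s; simp [traceFun]
        rw [this, map_zero]
      have h1 : φ (gen p e ε b (Sum.inr (Sum.inr ()))) = 0 := by
        simpa [htr0] using hev 0 1
      have h2 : ∀ z, φ (traceFun p ε z) = 0 := by
        let a : L →+ F := AddMonoidHom.mk' (fun z => φ (traceFun p ε z))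
          (fun z z' => by rw [traceFun_add, map_add])
        refine twisted_sum_injective (e := e) (a := a) (M := p ^ e - 1) (θ := θ)
          (hγ ▸ pow_orderOf_eq_one γ) (generator_pow_ne_one he hN hθ) ?_
        intro z
        simpa [h1, a] using hev (0, z) 0
      rcases k with ⟨⟨i₀, j₀⟩, hij⟩ | l | ⟨⟩
      · have h3 : ∀ c : F, ∑ j : Fin e, (∑ i, if (i, j) ∈ T ∧ src i j = src i₀ j₀ then
            φ (gen p e ε b (Sum.inl (i, j))) else 0) * c ^ p ^ (j : ℕ) = 0 := by
          intro c
          have h4 := hev (Pi.single (src i₀ j₀) c, 0) 0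
          simp only [mul_zero, htr0, Finset.sum_const_zero, add_zero, zero_mul] at h4
          rw [Finset.sum_comm] at h4
          refine Eq.trans ?_ h4
          refine Finset.sum_congr rfl fun j _ => ?_
          rw [Finset.sum_mul]
          refine Finset.sum_congr rfl fun i _ => ?_
          have hp := (Fact.out : p.Prime)
          by_cases hm : (i, j) ∈ T
          · by_cases hs : src i j = src i₀ j₀
            · simp [coeff, hm, hs, mul_comm]
            · simp [coeff, hm, hs, hp.ne_zero]
          · simp [coeff, hm]
        have h5 := frobenius_indep he hγ _ h3 j₀
        rw [Finset.sum_eq_single i₀] at h5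
        · rwa [if_pos ⟨hij, rfl⟩] at h5
        · intro i _ hi
          rw [if_neg]
          rintro ⟨hm, hs⟩
          exact hi (src_inj hT hm hij hs)
        · simp
      · exact h2 _
      · exact h1
  rw [rankC, hspan, finrank_span_eq_card hli]
  simp [hL, add_assoc]

/-- The kernel of the code consists of the combinations of `1` and the coordinates `w i` with
`m ≤ i`. If the row of `(u, x)` has its multiple by `γ` in the code, as the row of
`(u', x')` up to a constant, then `γ * u (i - 1) ^ p = (γ * u (i - 1)) ^ p` for `1 ≤ i ≤ m` and
`γ * Tr (x * y) = Tr (x' * y)` for all `y`. Both force zero since `γ` lies outside `F_p`. -/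
lemma kerDim_ghMatrix [CharP F p] [Finite L] {m N : ℕ} (he : 1 < e) (hN : e < N) (hm : m < n)
    (hT : Admissible m T) {γ : F} {θ : L} (hγ : orderOf γ = p ^ e - 1)
    (hθ : orderOf θ = p ^ N - 1) :
    kerDim F (ghCode (ghMatrix p ε T γ θ)) = n - m + 1 := by
  classical
  have hp := (Fact.out : p.Prime)
  have hγ0 : γ ≠ 0 := by
    rintro rfl
    have h1 : p ^ 2 ≤ p ^ e := Nat.pow_le_pow_right hp.pos he
    have h2 := hp.two_le
    have h3 : (0 : F) ^ (p ^ e - 1) = 1 := hγ ▸ pow_orderOf_eq_one 0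
    rw [zero_pow (by nlinarith [Nat.sub_add_cancel (Nat.one_le_pow e p hp.pos)])] at h3
    exact zero_ne_one h3
  have hγp : γ ^ p ≠ γ := by
    intro h
    have h1 : γ ^ (p - 1) = 1 := by
      have : γ ^ (p - 1) * γ = 1 * γ := by
        rw [← pow_succ, Nat.sub_add_cancel hp.one_le, h, one_mul]
      exact mul_right_cancel₀ hγ0 this
    have h4 : p ^ e - 1 ∣ p - 1 := hγ ▸ orderOf_dvd_of_pow_eq_one h1
    have h5 := hp.two_le
    have h2 := Nat.le_of_dvd (by omega) h4
    have h3 : p ^ 1 < p ^ e := Nat.pow_lt_pow_right hp.one_lt he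
    rw [pow_one] at h3
    omega
  let b := Module.finBasis (ZMod p) L
  let emb : {i : Fin n // m ≤ (i : ℕ)} ⊕ Unit →
      (Fin n × Fin e) ⊕ (Fin (Module.finrank (ZMod p) L) ⊕ Unit) :=
    Sum.map (fun i => (i.1, ⟨0, by omega⟩)) Sum.inr
  have hemb : Function.Injective emb := by
    refine Sum.map_injective.2 ⟨fun i i' h => ?_, Sum.inr_injective⟩
    exact Subtype.ext (Prod.ext_iff.1 h).1
  have hli := (linearIndependent_gen ε he hγ b).comp emb hemb
  have hspan : Submodule.span F (kerSet (ghCode (ghMatrix p ε T γ θ))) =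
      Submodule.span F (Set.range (gen p e ε b ∘ emb)) := by
    have hmem : ∀ k, gen p e ε b (emb k) ∈ Submodule.span F (Set.range (gen p e ε b ∘ emb)) :=
      fun k => Submodule.subset_span ⟨k, rfl⟩
    apply le_antisymm
    · rw [Submodule.span_le]
      intro x hx
      rw [mem_kerSet] at hx
      have hx1 := hx 1
      rw [one_smul] at hx1
      obtain ⟨u, α, rfl⟩ := (mem_code ε T γ θ).1 hx1
      obtain ⟨u', α', hu'⟩ := (mem_code ε T γ θ).1 (hx γ)
      have hev : ∀ w, γ * (form p T γ θ u w + α) = form p T γ θ u' w + α' := by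
        intro w
        simpa using congrFun hu' (ε.symm w)
      have hα : γ * α = α' := by simpa using hev 0
      have hev' : ∀ w, γ * form p T γ θ u w = form p T γ θ u' w := by
        intro w
        linear_combination hev w - hα
      have hco : ∀ i j, γ * coeff p T u.1 i j = coeff p T u'.1 i j := by
        intro i j
        rw [← sub_eq_zero]
        refine frobenius_indep he hγ
          (fun j => γ * coeff p T u.1 i j - coeff p T u'.1 i j) (fun c => ?_) j
        have := hev' (Pi.single i c, 0)
        rw [form_single, form_single, Finset.mul_sum, ← sub_eq_zero,
          ← Finset.sum_sub_distrib] at this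
        rw [← this]
        exact Finset.sum_congr rfl fun j _ => by ring
      have hlin : ∀ i, γ * u.1 i = u'.1 i := by
        intro i
        have h := hco i ⟨0, by omega⟩
        have hi : (i, (⟨0, by omega⟩ : Fin e)) ∈ T := hT.lin _ _ rfl
        simpa [coeff, hi, src] using h
      have hvan : ∀ i : Fin n, (i : ℕ) < m → u.1 i = 0 := by
        intro i hi
        have h := hco ⟨i + 1, by omega⟩ ⟨1, he⟩
        have hi' : ((⟨i + 1, by omega⟩ : Fin n), (⟨1, he⟩ : Fin e)) ∈ T :=
          hT.frob _ _ rfl (by simp) (by simp only; omega)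
        simp only [coeff, hi', if_true, src, one_ne_zero, if_false, pow_one,
          Nat.add_sub_cancel] at h
        rw [← hlin] at h
        by_contra h0
        rw [mul_pow] at h
        exact hγp (mul_right_cancel₀ (pow_ne_zero p h0) h).symm
      have hL0 : u.2 = 0 := by
        let a : L →+ F := AddMonoidHom.mk'
          (fun y => γ * algebraMap (ZMod p) F (Algebra.trace (ZMod p) L (u.2 * y))
            - algebraMap (ZMod p) F (Algebra.trace (ZMod p) L (u'.2 * y)))
          (fun y y' => by simp only [mul_add, map_add]; ring)
        have ha := twisted_sum_injective (e := e) (a := a) (M := p ^ e - 1) (θ := θ)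
          (hγ ▸ pow_orderOf_eq_one γ) (generator_pow_ne_one he hN hθ) (by
            intro y
            have h := hev' (0, y)
            rw [form_inr, form_inr, fieldForm, fieldForm, Finset.mul_sum, ← sub_eq_zero,
              ← Finset.sum_sub_distrib] at h
            rw [← h]
            refine Finset.sum_congr rfl fun j _ => ?_
            simp only [a, AddMonoidHom.mk'_apply]
            rw [mul_left_comm u.2, mul_left_comm u'.2, mul_assoc, mul_assoc]
            ring)
        apply trace_mul_eq_zero (p := p)
        intro y
        by_contra h0
        have h1 : γ * algebraMap (ZMod p) F (Algebra.trace (ZMod p) L (u.2 * y))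
            = algebraMap (ZMod p) F (Algebra.trace (ZMod p) L (u'.2 * y)) :=
          sub_eq_zero.1 (ha y)
        have h2 : algebraMap (ZMod p) F (Algebra.trace (ZMod p) L (u.2 * y)) ≠ 0 :=
          (map_ne_zero _).2 h0
        have h3 : γ = algebraMap (ZMod p) F (Algebra.trace (ZMod p) L (u'.2 * y) /
            Algebra.trace (ZMod p) L (u.2 * y)) := by
          rw [map_div₀, eq_div_iff h2, h1]
        apply hγp
        rw [h3, ← map_pow, ZMod.pow_card]
      rw [codeword_eq ε T γ θ b]
      refine Submodule.add_mem _ (Submodule.add_mem _ ?_ ?_) ?_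
      · refine Submodule.sum_mem _ fun i _ => Submodule.sum_mem _ fun j _ => ?_
        rw [coeff_of_vanish hT hvan]
        split_ifs with hj
        · by_cases hi : (i : ℕ) < m
          · simp [hvan i hi]
          · have hj' : j = ⟨0, by omega⟩ := Fin.ext hj
            rw [hj']
            exact Submodule.smul_mem _ _ (hmem (Sum.inl ⟨i, by omega⟩))
        · simp
      · have : (traceFun p ε (0 : L) : ι → F) = 0 := by funext s; simp [traceFun]
        simp [hL0, this]
      · exact Submodule.smul_mem _ _ (hmem (Sum.inr ()))
    · rw [Submodule.span_le]
      rintro _ ⟨k, rfl⟩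
      apply Submodule.subset_span
      rw [mem_kerSet]
      intro α
      rw [mem_code]
      rcases k with ⟨i, hi⟩ | ⟨⟩
      · refine ⟨(Pi.single i α, 0), 0, ?_⟩
        have hvan : ∀ i' : Fin n, (i' : ℕ) < m → (Pi.single i α : Fin n → F) i' = 0 := by
          intro i' hi'
          exact Pi.single_eq_of_ne (by rintro rfl; omega) _
        have htr : (traceFun p ε (0 : L) : ι → F) = 0 := by funext s; simp [traceFun]
        rw [codeword_eq ε T γ θ b]
        simp only [mul_zero, htr, smul_zero, Finset.sum_const_zero, add_zero, zero_smul]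
        rw [Finset.sum_eq_single i, Finset.sum_eq_single (⟨0, by omega⟩ : Fin e)]
        · rw [coeff_of_vanish hT hvan]
          simp [emb]
        · intro j _ hj
          rw [coeff_of_vanish hT hvan, if_neg (fun h => hj (Fin.ext h)), zero_smul]
        · simp
        · intro i' _ hi'
          refine Finset.sum_eq_zero fun j _ => ?_
          rw [coeff_of_vanish hT hvan, Pi.single_eq_of_ne hi', ite_self, zero_smul]
        · simp
      · exact ⟨0, α, by funext s; simp [emb, gen]⟩
  rw [kerDim, hspan, finrank_span_eq_card hli]
  have hcard : Fintype.card {i : Fin n // m ≤ (i : ℕ)} = n - m := by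
    have := Fintype.card_subtype_compl (fun i : Fin n => (i : ℕ) < m)
    have h2 : Fintype.card {i : Fin n // (i : ℕ) < m} = m := by
      rw [← Fintype.card_congr (Fin.castLEquiv hm.le), Fintype.card_fin]
    simp only [not_lt] at this
    rw [Fintype.card_fin, h2] at this
    exact this
  rw [Fintype.card_sum, hcard]
  simp

end Code

/-! ### Choice of the monomials and conclusion -/

/-- Admissible sets exist in every size between that of the smallest one, with one nonlinear
monomial per index `1 ≤ i ≤ m`, and that of the largest one, with `e - 1` of them. -/
lemma exists_admissible {n e m c : ℕ} (he : 1 < e) (hm : m < n) (h₁ : n + m ≤ c)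
    (h₂ : c ≤ n + m * (e - 1)) :
    ∃ T : Finset (Fin n × Fin e), Admissible m T ∧ T.card = c := by
  let f : Fin n ⊕ Fin m → Fin n × Fin e :=
    Sum.elim (fun i => (i, ⟨0, by omega⟩)) (fun i => (⟨i + 1, by omega⟩, ⟨1, he⟩))
  let g : Fin n ⊕ (Fin m × Fin (e - 1)) → Fin n × Fin e :=
    Sum.elim (fun i => (i, ⟨0, by omega⟩)) (fun x => (⟨x.1 + 1, by omega⟩, ⟨x.2 + 1, by omega⟩))
  have hg : Function.Injective g := by
    rintro (i | ⟨i, j⟩) (i' | ⟨i', j'⟩) h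
    · simp_all [g]
    · simp [g] at h
    · simp [g] at h
    · simp only [g, Sum.elim_inr, Prod.mk.injEq, Fin.mk.injEq] at h
      have h1 : i = i' := Fin.ext (by omega)
      have h2 : j = j' := Fin.ext (by omega)
      rw [h1, h2]
  have hsub : Finset.univ.image f ⊆ Finset.univ.image g := by
    intro x hx
    obtain ⟨y, -, rfl⟩ := Finset.mem_image.1 hx
    rcases y with i | i
    · exact Finset.mem_image.2 ⟨Sum.inl i, Finset.mem_univ _, rfl⟩
    · exact Finset.mem_image.2 ⟨Sum.inr (i, ⟨0, by omega⟩), Finset.mem_univ _, rfl⟩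
  have hf : (Finset.univ.image f).card ≤ c := by
    refine le_trans Finset.card_image_le ?_
    simpa using h₁
  have hg' : c ≤ (Finset.univ.image g).card := by
    rw [Finset.card_image_of_injective _ hg]
    simpa using h₂
  obtain ⟨T, hT₁, hT₂, hT⟩ := Finset.exists_subsuperset_card_eq hsub hf hg'
  refine ⟨T, ⟨?_, ?_, ?_⟩, hT⟩
  · intro i j hj
    apply hT₁
    exact Finset.mem_image.2 ⟨Sum.inl i, Finset.mem_univ _, Prod.ext rfl (Fin.ext hj.symm)⟩
  · intro i j hij hj
    obtain ⟨y, -, hy⟩ := Finset.mem_image.1 (hT₂ hij)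
    rcases y with i' | ⟨i', j'⟩
    · simp only [g, Sum.elim_inl, Prod.mk.injEq] at hy
      exact absurd (by rw [← hy.2]) hj
    · simp only [g, Sum.elim_inr, Prod.mk.injEq] at hy
      rw [← hy.1]
      exact ⟨by simp, i'.2⟩
  · intro i j hj hi him
    apply hT₁
    refine Finset.mem_image.2 ⟨Sum.inr ⟨i - 1, by omega⟩, Finset.mem_univ _, ?_⟩
    refine Prod.ext (Fin.ext ?_) (Fin.ext hj.symm)
    simp only [f, Sum.elim_inr]
    omega

theorem stmt14 (p e t k r : ℕ) [Fact p.Prime] (he : 1 < e) (ht : e < t)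
    (hnd : ¬ e ∣ t) (hk₁ : 2 ≤ k) (hk₂ : k ≤ t / e)
    (hr₁ : 2 * ((t / e : ℕ) : ℤ) - k + t + e - ((t / e : ℕ) : ℤ) * e ≤ (r : ℤ))
    (hr₂ : (r : ℤ) ≤ 1 + t - ((e : ℤ) - 1) * ((k : ℤ) - 1)) :
    ∃ H : Matrix (Fin (p ^ t)) (Fin (p ^ t)) (GaloisField p e),
      IsGH (p ^ (t - e)) H ∧ IsNormalized H ∧ IsFpAdditive p (ghCode H) ∧
      kerDim (GaloisField p e) (ghCode H) = k ∧
      rankC (GaloisField p e) (ghCode H) = r := by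
  classical
  have hp := (Fact.out : p.Prime)
  -- `t = h * e + s`, with `0 < s < e`
  obtain ⟨h, hh⟩ : ∃ h, h = t / e := ⟨_, rfl⟩
  obtain ⟨s, hs⟩ : ∃ s, s = t % e := ⟨_, rfl⟩
  have hts : e * h + s = t := by rw [hh, hs]; exact Nat.div_add_mod t e
  have hs0 : 0 < s := by
    rw [hs]; exact Nat.pos_of_ne_zero fun h0 => hnd (Nat.dvd_of_mod_eq_zero h0)
  rw [← hh] at hk₂ hr₁
  obtain ⟨m, rfl⟩ : ∃ m, h = k + m := ⟨h - k, by omega⟩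
  obtain ⟨k, rfl⟩ : ∃ k', k = k' + 1 := ⟨k - 1, by omega⟩
  obtain ⟨d, rfl⟩ : ∃ d, e = d + 1 := ⟨e - 1, by omega⟩
  have hr₁' : (k + m) + m + (d + 1 + s) + 1 ≤ r := by
    have h1 : ((d + 1 : ℕ) : ℤ) * ((k + 1 + m : ℕ) : ℤ) + s = t := by exact_mod_cast hts
    push_cast at hr₁ h1
    zify
    linarith
  have hr₂' : r ≤ (k + m) + m * d + (d + 1 + s) + 1 := by
    have h1 : ((d + 1 : ℕ) : ℤ) * ((k + 1 + m : ℕ) : ℤ) + s = t := by exact_mod_cast hts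
    push_cast at hr₂ h1
    zify
    linarith
  obtain ⟨T, hT, hTc⟩ := exists_admissible (n := k + m) (e := d + 1) (m := m)
    (c := r - (d + 1 + s) - 1) he (by omega) (by omega) (by rw [Nat.add_sub_cancel]; omega)
  set N := d + 1 + s with hNdef
  have hN : d + 1 < N := by omega
  have hcF : Nat.card (GaloisField p (d + 1)) = p ^ (d + 1) := GaloisField.card p _ (by omega)
  have hcL : Nat.card (GaloisField p N) = p ^ N := GaloisField.card p _ (by omega)
  have hfF : Module.finrank (ZMod p) (GaloisField p (d + 1)) = d + 1 :=
    GaloisField.finrank p (by omega)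
  have hfL : Module.finrank (ZMod p) (GaloisField p N) = N := GaloisField.finrank p (by omega)
  obtain ⟨γ, hγ, hγd⟩ := exists_generator p (GaloisField p (d + 1))
  obtain ⟨θ, hθ, hθd⟩ := exists_generator p (GaloisField p N)
  rw [hcF] at hγ
  rw [hfF] at hγd
  rw [hcL] at hθ
  rw [hfL] at hθd
  have hcard : Nat.card ((Fin (k + m) → GaloisField p (d + 1)) × GaloisField p N) = p ^ t := by
    rw [Nat.card_prod, Nat.card_fun, hcF, hcL, Nat.card_fin, ← pow_mul, ← pow_add]
    congr 1
    rw [← hts, hNdef]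
    ring
  have hpos : 0 < p ^ t := pow_pos hp.pos t
  obtain ⟨ε, hε⟩ : ∃ ε : Fin (p ^ t) ≃ (Fin (k + m) → GaloisField p (d + 1)) × GaloisField p N,
      ε ⟨0, hpos⟩ = 0 := by
    have ε₀ : Fin (p ^ t) ≃ (Fin (k + m) → GaloisField p (d + 1)) × GaloisField p N :=
      (Finite.equivFinOfCardEq hcard).symm
    exact ⟨ε₀.trans (Equiv.swap (ε₀ ⟨0, hpos⟩) 0), by simp⟩
  refine ⟨ghMatrix p ε T γ θ, ?_, ?_, ?_, ?_, ?_⟩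
  · refine isGH_ghMatrix ε T he hN hT hγd hfF hθd ?_
    rw [Nat.card_fin, hcF, ← pow_add, Nat.sub_add_cancel ht.le]
  · rintro i j (hi | hj)
    · have : i = ⟨0, hpos⟩ := Fin.ext hi
      rw [ghMatrix, this, hε, form_zero_left]
    · have : j = ⟨0, hpos⟩ := Fin.ext hj
      rw [ghMatrix, this, hε, form_zero_right]
  · exact ⟨AddSubgroup.toZModSubmodule p (codeGroup p ε T γ θ), rfl⟩
  · rw [kerDim_ghMatrix ε T he hN (by omega) hT hγ hθ]
    omega
  · rw [rankC_ghMatrix ε T he hN hT hγ hθ hfL, hTc]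
    omega
end

section
/- Let p ∈ {3, 5} and q = p⁴. For every integer t ≥ 4 and every integer i with 0 ≤ i ≤ ⌈t/4⌉ − 2 (the range being empty when ⌈t/4⌉ < 2), there exists a normalized generalized Hadamard matrix H over F_q of order p^t such that C_H is an F_p-additive code of length p^t with ker(C_H) = 1 and rank(C_H) = t + 1 − 2i. -/
/-!
Write `k = 𝔽_p`, `K = 𝔽_{p^4}`. The hypothesis on `i` says that `m = t - 4 i` is at least `5`.
Rows and columns of the matrix are both indexed by the group `R = E × K^i` of order `p ^ t`, where
`E = 𝔽_{p^m}`, and the entries are values of the biadditive form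
`B (r, u) (s, v) = T (r s) + ∑ l, φ (u_l v_l)` (`ghForm`), with `T : E → K` a `k`-linear surjection
and `φ x = x - c x ^ p` for a nonsquare `c`. As `p - 1` is even, `φ` is injective, hence bijective;
so `B r` is a surjective homomorphism `R → K` for every `r ≠ 0`, all its fibres have the same size,
and the matrix is generalised Hadamard. Biadditivity makes the code additive.

Let `b` be a `k`-basis of `E`. The `K`-span of the code is spanned by the `1 + m + 2 i` functions
`1`, `(s, v) ↦ T (b_j s)`, `v_l`, `v_l ^ p` of the column `(s, v)` (`coord_mem_span`,
`ghForm_eq_coord`). If they are linearly independent over `K` (`ghCoord_injective`), the rank is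
`1 + m + 2 i = t + 1 - 2 i`. The kernel is read off from the same coordinates: the row of `(r, u)`
has coordinates `r_j ∈ k`, `u_l` and `-c u_l ^ p`, so if the code also contains its multiple by
some `w` with `w ^ p ≠ w`, up to constants, then `r = 0` and `u = 0`. Hence the kernel consists of
the constants.

The independence of the functions `s ↦ T (b_j s)` depends on the choice of `T`
(`exists_functional`). Let `x` and `ω` generate `E` and `K` over `k`, and let `T` send `x ^ j` to
`ω ^ j` for `j < m`. Then `T (x y) - ω T y = κ λ(y)`, where `λ` is the coefficient of `x ^ (m - 1)`
and `κ` is a constant, nonzero because otherwise `T` would send `g(x)` to `g(ω)` for all `g` over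
`k`, making `ω` a root of the minimal polynomial of `x`, whose degree `m` exceeds `4`. A relation
`∑ a_j T (b_j s) = 0` for all `s` therefore gives `∑ a_j λ(b_j s) = 0` for all `s`, and `a = 0`
follows by taking for `s` the dual basis of `b` for the nondegenerate form `λ(r s)`.
-/

open scoped BigOperators

/-! ### A linear surjection with independent multiples -/

/-- A linear surjection `T : E → K` from the larger field such that the functions `s ↦ T (b j * s)`
are linearly independent over `K`, for every `k`-basis `b` of `E`. -/
theorem exists_functional {k E K : Type*} [Field k] [Finite k] [Field E] [Field K] [Algebra k E]
    [Algebra k K] [FiniteDimensional k E] [FiniteDimensional k K]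
    (h : Module.finrank k K < Module.finrank k E) :
    ∃ T : E →ₗ[k] K, Function.Surjective T ∧
      ∀ {ι : Type} [Fintype ι] (b : Module.Basis ι k E) (a : ι → K),
        (∀ s, ∑ j, a j * T (b j * s) = 0) → a = 0 := by
  classical
  let pb := Field.powerBasisOfFiniteOfSeparable k E
  let pb' := Field.powerBasisOfFiniteOfSeparable k K
  have hdim : pb.dim = Module.finrank k E := pb.finrank.symm
  have hdim' : pb'.dim = Module.finrank k K := pb'.finrank.symm
  let x := pb.gen
  let ω := pb'.gen
  let T : E →ₗ[k] K := pb.basis.constr k (fun j => ω ^ (j : ℕ))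
  have hT : ∀ j, j < pb.dim → T (x ^ j) = ω ^ j := by
    intro j hj
    have := pb.basis.constr_basis k (fun j => ω ^ (j : ℕ)) ⟨j, hj⟩
    simpa [T, x, PowerBasis.coe_basis] using this
  have hpos : 0 < pb.dim := pb.dim_pos
  let last : Fin pb.dim := ⟨pb.dim - 1, by omega⟩
  let lam := pb.basis.coord last
  -- `T` fails to intertwine multiplication by `x` and by `ω` only on the last power of `x`.
  let κ : K := T (x * x ^ (pb.dim - 1)) - ω * T (x ^ (pb.dim - 1))
  have hD : ∀ y, T (x * y) - ω * T y = algebraMap k K (lam y) * κ := by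
    have key : (T ∘ₗ LinearMap.mulLeft k x) - (LinearMap.mulLeft k ω) ∘ₗ T
        = (LinearMap.toSpanSingleton k K κ) ∘ₗ lam := by
      refine pb.basis.ext fun j => ?_
      have hb : pb.basis j = x ^ (j : ℕ) := by simp [x]
      have hl : lam (pb.basis j) = if j = last then 1 else 0 := by
        rw [Module.Basis.coord_apply, Module.Basis.repr_self, Finsupp.single_apply]
      simp only [LinearMap.sub_apply, LinearMap.comp_apply, LinearMap.mulLeft_apply,
        LinearMap.toSpanSingleton_apply, hl]
      rw [hb]
      split_ifs with hj
      · subst hj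
        simp [κ, last]
      · have hj' : (j : ℕ) + 1 < pb.dim := by
          have h1 := j.2
          have h2 : (j : ℕ) ≠ pb.dim - 1 := fun h => hj (Fin.ext h)
          omega
        rw [← pow_succ', hT _ hj', hT _ j.2, pow_succ']
        simp
    intro y
    have := LinearMap.congr_fun key y
    simpa [Algebra.smul_def] using this
  have hκ : κ ≠ 0 := by
    intro h0
    -- Otherwise `T` is evaluation at `ω`, so `ω` is a root of the minimal polynomial of `x`.
    have hmul : ∀ y, T (x * y) = ω * T y := fun y => by
      have := hD y
      rw [h0, mul_zero, sub_eq_zero] at this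
      exact this
    have hpow : ∀ n : ℕ, T (x ^ n) = ω ^ n := by
      intro n
      induction n with
      | zero => exact hT 0 hpos
      | succ n ih => rw [pow_succ', hmul, ih, pow_succ']
    have haev : ∀ g : Polynomial k, T (Polynomial.aeval x g) = Polynomial.aeval ω g := by
      intro g
      induction g using Polynomial.induction_on' with
      | add f g hf hg => simp [hf, hg]
      | monomial n a => simp [Polynomial.aeval_monomial, ← Algebra.smul_def, hpow]
    have hroot : Polynomial.aeval ω (minpoly k x) = 0 := by
      rw [← haev, minpoly.aeval, map_zero]
    have hx : IsIntegral k x := Algebra.IsIntegral.isIntegral x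
    have heq : minpoly k x = minpoly k ω :=
      minpoly.eq_of_irreducible_of_monic (minpoly.irreducible hx) hroot (minpoly.monic hx)
    have h1 := minpoly.natDegree_le (A := k) ω
    rw [← heq, pb.natDegree_minpoly, hdim] at h1
    omega
  refine ⟨T, ?_, ?_⟩
  · rw [← LinearMap.range_eq_top, eq_top_iff, ← pb'.basis.span_eq, Submodule.span_le]
    rintro _ ⟨j, rfl⟩
    exact ⟨x ^ (j : ℕ), by rw [hT _ (by have := j.2; omega)]; simp [ω]⟩
  · intro ι _ b a ha
    have hlam : ∀ s, ∑ j, a j * algebraMap k K (lam (b j * s)) = 0 := by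
      intro s
      have h1 := ha (x * s)
      have h2 := ha s
      have : ∑ j, a j * (T (x * (b j * s)) - ω * T (b j * s)) = 0 := by
        have h3 : ∑ j, a j * (ω * T (b j * s)) = 0 := by
          rw [← mul_zero ω, ← h2, Finset.mul_sum]
          exact Finset.sum_congr rfl fun j _ => by ring
        simp only [mul_sub, Finset.sum_sub_distrib, h3, sub_zero]
        rw [← h1]
        exact Finset.sum_congr rfl fun j _ => by rw [mul_left_comm]
      simp only [hD] at this
      simp only [← mul_assoc, ← Finset.sum_mul] at this
      exact (mul_eq_zero.mp this).resolve_right hκ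
    let β : LinearMap.BilinForm k E := (LinearMap.mul k E).compr₂ lam
    have hβ : ∀ r s, β r s = lam (r * s) := fun r s => rfl
    have hnd : β.Nondegenerate := by
      have hne : ∀ r, (∀ s, lam (r * s) = 0) → r = 0 := by
        intro r hr
        by_contra h0
        have := hr (r⁻¹ * pb.basis last)
        rw [mul_inv_cancel_left₀ h0, Module.Basis.coord_apply, Module.Basis.repr_self,
          Finsupp.single_eq_same] at this
        exact one_ne_zero this
      refine ⟨fun r hr => hne r hr, fun r hr => hne r fun s => ?_⟩
      rw [mul_comm]; exact hr s
    funext l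
    have := hlam (β.dualBasis hnd b l)
    have hd : ∀ j, lam (b j * β.dualBasis hnd b l) = if j = l then 1 else 0 := fun j => by
      rw [mul_comm, ← hβ, LinearMap.BilinForm.apply_dualBasis_left]
    simpa [hd] using this

/-! ### Finite fields and fibres -/

/-- For a nonsquare `c`, the additive map `x ↦ x - c * x ^ p` has trivial kernel. -/
theorem exists_twist {p : ℕ} {K : Type*} [Field K] [Finite K] [CharP K p] (hp : Odd p) :
    ∃ c : K, c ≠ 0 ∧ ∀ x : K, x - c * x ^ p = 0 → x = 0 := by
  obtain ⟨c, hc⟩ := FiniteField.exists_nonsquare (F := K) (by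
    rw [ringChar.eq K p]; rintro rfl; exact absurd hp (by decide))
  refine ⟨c, fun h => hc (h ▸ IsSquare.zero), fun x hx => by_contra fun h0 => hc ?_⟩
  obtain ⟨m, rfl⟩ := hp
  refine ⟨(x ^ m)⁻¹, ?_⟩
  have hm : x ^ m ≠ 0 := pow_ne_zero _ h0
  have : x * (1 - c * (x ^ m * x ^ m)) = 0 := by rw [← hx]; ring
  have h2 := (mul_eq_zero.mp this).resolve_left h0
  field_simp
  linear_combination -h2

theorem exists_pow_ne {p : ℕ} {K : Type*} [Field K] [Finite K] (hp : 1 < p)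
    (hK : p < Nat.card K) : ∃ w : K, w ^ p ≠ w := by
  by_contra! h
  have := Fintype.ofFinite K
  have h1 : (Polynomial.X ^ p - Polynomial.X : Polynomial K) ≠ 0 :=
    FiniteField.X_pow_card_sub_X_ne_zero K hp
  have h2 := Polynomial.card_roots' (Polynomial.X ^ p - Polynomial.X : Polynomial K)
  rw [FiniteField.X_pow_card_sub_X_natDegree_eq K hp] at h2
  have h3 : (Finset.univ : Finset K).val ≤ (Polynomial.X ^ p - Polynomial.X : Polynomial K).roots :=
    (Multiset.le_iff_subset Finset.univ.nodup).mpr fun x _ => by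
      rw [Polynomial.mem_roots h1]; simp [h x]
  have h4 := Multiset.card_le_card h3
  rw [Nat.card_eq_fintype_card] at hK
  simp at h4
  omega

theorem card_fiber {A B : Type*} [AddCommGroup A] [AddCommGroup B] [Finite A] [Finite B]
    (f : A →+ B) (hf : Function.Surjective f) (b : B) :
    Nat.card {s // f s = b} * Nat.card B = Nat.card A := by
  have h1 : ∀ b' : B, Nat.card {s // f s = b'} = Nat.card {s // f s = b} := by
    intro b'
    obtain ⟨d, hd⟩ := hf (b - b')
    exact Nat.card_congr
      { toFun := fun s => ⟨s.1 + d, by rw [map_add, s.2, hd]; abel⟩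
        invFun := fun s => ⟨s.1 - d, by rw [map_sub, s.2, hd]; abel⟩
        left_inv := fun s => by simp
        right_inv := fun s => by simp }
  have := Fintype.ofFinite B
  rw [← Nat.card_congr (Equiv.sigmaFiberEquiv f), Nat.card_sigma]
  simp [h1, mul_comm]

/-! ### The form and its rows -/

section Form

variable {k E K : Type*} [Field k] [Field E] [Field K] [Algebra k E] [Algebra k K]
  (T : E →ₗ[k] K) (c : K) (p : ℕ) {i : ℕ}

/-- The biadditive form on `E × K ^ i` whose table of values is the generalised Hadamard matrix. -/
def ghForm (r s : E × (Fin i → K)) : K :=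
  T (r.1 * s.1) + ∑ l, (r.2 l * s.2 l - c * (r.2 l * s.2 l) ^ p)

theorem ghForm_comm (r s : E × (Fin i → K)) : ghForm T c p r s = ghForm T c p s r := by
  simp [ghForm, mul_comm]

theorem ghForm_add_left [Fact p.Prime] [CharP K p] (r r' s : E × (Fin i → K)) :
    ghForm T c p (r + r') s = ghForm T c p r s + ghForm T c p r' s := by
  have : ExpChar K p := ExpChar.prime Fact.out
  simp only [ghForm, Prod.fst_add, Prod.snd_add, Pi.add_apply, add_mul, map_add,
    add_pow_expChar, mul_add]
  rw [add_add_add_comm, ← Finset.sum_add_distrib]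
  congr 1
  exact Finset.sum_congr rfl fun l _ => by ring

/-- A row of `ghForm`, as an additive homomorphism in the column. -/
def ghHom [Fact p.Prime] [CharP K p] (r : E × (Fin i → K)) : E × (Fin i → K) →+ K :=
  AddMonoidHom.mk' (ghForm T c p r) fun s s' => by
    rw [ghForm_comm, ghForm_add_left, ghForm_comm, ghForm_comm T c p s']

theorem ghForm_single (hp : p ≠ 0) (l : Fin i) (x : K) (s : E × (Fin i → K)) :
    ghForm T c p (0, Pi.single l x) s = x * s.2 l - c * (x * s.2 l) ^ p := by
  rw [ghForm, Finset.sum_eq_single l]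
  · simp
  · intro j _ hj
    simp [hj, hp]
  · simp

theorem ghForm_surjective [Fact p.Prime] [CharP K p] [Finite K] (hT : Function.Surjective T)
    (hc : ∀ x : K, x - c * x ^ p = 0 → x = 0) {r : E × (Fin i → K)} (hr : r ≠ 0) :
    Function.Surjective (ghHom T c p r) := by
  have : ExpChar K p := ExpChar.prime Fact.out
  have hp0 : p ≠ 0 := (Fact.out : p.Prime).ne_zero
  intro y
  by_cases h1 : r.1 = 0
  · obtain ⟨l, hl⟩ : ∃ l, r.2 l ≠ 0 := by
      by_contra! h
      exact hr (Prod.ext h1 (funext h))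
    let φ : K →+ K := AddMonoidHom.mk' (fun x => x - c * x ^ p) fun a b => by
      rw [add_pow_expChar]; ring
    have hφ : Function.Surjective φ :=
      Finite.surjective_of_injective ((injective_iff_map_eq_zero φ).mpr hc)
    obtain ⟨z, hz⟩ := hφ y
    refine ⟨(0, Pi.single l (z / r.2 l)), ?_⟩
    change ghForm T c p r _ = y
    rw [ghForm_comm, ghForm_single T c p hp0, div_mul_cancel₀ _ hl]
    exact hz
  · obtain ⟨z, hz⟩ := hT y
    refine ⟨(r.1⁻¹ * z, 0), ?_⟩
    simp [ghHom, ghForm, mul_inv_cancel_left₀ h1, hz, hp0]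

variable {ι S : Type} [Fintype ι] (b : Module.Basis ι k E)

/-- The linear combination, with coefficients `z`, of the constant function `1` and the functions
`(s, v) ↦ T (b j * s)`, `v l`, `v l ^ p`; the columns `(s, v)` are enumerated by `e`. -/
noncomputable def ghCoord (e : S → E × (Fin i → K)) :
    (K × (ι → K) × (Fin i → K) × (Fin i → K)) →ₗ[K] (S → K) where
  toFun z s := z.1 + ∑ j, z.2.1 j * T (b j * (e s).1) +
    ∑ l, (z.2.2.1 l * (e s).2 l + z.2.2.2 l * (e s).2 l ^ p)
  map_add' z z' := by
    funext s
    simp only [Prod.fst_add, Prod.snd_add, Pi.add_apply, add_mul, Finset.sum_add_distrib]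
    ring
  map_smul' a z := by
    funext s
    simp only [Prod.smul_fst, Prod.smul_snd, Pi.smul_apply, smul_eq_mul, mul_add, Finset.mul_sum,
      RingHom.id_apply, mul_assoc]

theorem ghCoord_injective (hp : p ≠ 0) (e : S ≃ E × (Fin i → K))
    (hT : ∀ a : ι → K, (∀ s, ∑ j, a j * T (b j * s) = 0) → a = 0)
    {w : K} (hw : w ^ p ≠ w) : Function.Injective (ghCoord T p b e) := by
  rw [← LinearMap.ker_eq_bot, LinearMap.ker_eq_bot']
  rintro ⟨c0, a, u, v⟩ hz
  have h : ∀ s : E × (Fin i → K), c0 + ∑ j, a j * T (b j * s.1) +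
      ∑ l, (u l * s.2 l + v l * s.2 l ^ p) = 0 := fun s => by
    simpa [ghCoord] using congrFun hz (e.symm s)
  have h0 : c0 = 0 := by simpa [hp] using h 0
  have ha : a = 0 := hT a fun s => by simpa [hp, h0] using h (s, 0)
  have huv : ∀ l x, u l * x + v l * x ^ p = 0 := by
    intro l x
    have := h (0, Pi.single l x)
    rw [Finset.sum_eq_single l] at this
    · simpa [h0] using this
    · intro j _ hj
      simp [hj, hp]
    · simp
  have hu : u = 0 := funext fun l => by
    have h1 := huv l 1
    have h2 := huv l w
    have h3 : u l * (w ^ p - w) = 0 := by linear_combination w ^ p * h1 - h2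
    exact (mul_eq_zero.mp h3).resolve_right (sub_ne_zero.mpr hw)
  have hv : v = 0 := funext fun l => by
    have h1 := huv l 1
    simpa [hu] using h1
  simp [h0, ha, hu, hv]

/-- The coordinates of a codeword. -/
theorem ghForm_eq_coord (e : S → E × (Fin i → K)) (r : E × (Fin i → K)) (α : K) :
    (fun s => ghForm T c p r (e s) + α) =
      ghCoord T p b e (α, fun j => algebraMap k K (b.repr r.1 j), r.2,
        fun l => - c * r.2 l ^ p) := by
  funext s
  have h1 : T (r.1 * (e s).1) = ∑ j, algebraMap k K (b.repr r.1 j) * T (b j * (e s).1) := by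
    conv_lhs => rw [← b.sum_repr r.1, Finset.sum_mul, map_sum]
    simp only [← Algebra.smul_def, ← map_smul, smul_mul_assoc]
  simp only [ghForm, ghCoord, LinearMap.coe_mk, AddHom.coe_mk, h1]
  have h2 : ∀ l, r.2 l * (e s).2 l - c * (r.2 l * (e s).2 l) ^ p =
      r.2 l * (e s).2 l + -c * r.2 l ^ p * (e s).2 l ^ p := fun l => by ring
  simp only [h2]
  ring

theorem coord_mem_span (hp : p ≠ 0) (hc : c ≠ 0) {w : K} (hw : w ^ p ≠ w)
    (e : S ≃ E × (Fin i → K)) (z : K × (ι → K) × (Fin i → K) × (Fin i → K)) :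
    ghCoord T p b e z ∈ Submodule.span K
      {f : S → K | ∃ (r : E × (Fin i → K)) (α : K), f = fun s => ghForm T c p r (e s) + α} := by
  obtain ⟨c0, a, u, v⟩ := z
  set M := Submodule.span K
      {f : S → K | ∃ (r : E × (Fin i → K)) (α : K), f = fun s => ghForm T c p r (e s) + α} with hM
  have hrow : ∀ r, (fun s => ghForm T c p r (e s)) ∈ M := fun r =>
    Submodule.subset_span ⟨r, 0, by simp⟩
  have hone : (fun _ => c0 : S → K) ∈ M :=
    Submodule.subset_span ⟨0, c0, by simp [ghForm, hp]⟩
  -- `v_l` and `v_l ^ p` are combinations of the rows with `u = 1` and `u = w` in position `l`;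
  -- `ν` is the coefficient of the latter.
  let ν : Fin i → K := fun l => (u l + v l / c) / (w - w ^ p)
  have hw' : w - w ^ p ≠ 0 := sub_ne_zero.mpr hw.symm
  have key : ghCoord T p b e (c0, a, u, v) = (fun _ => c0 : S → K) +
      ∑ j, a j • (fun s => ghForm T c p (b j, 0) (e s)) +
      ∑ l, ((u l - ν l * w) • (fun s => ghForm T c p (0, Pi.single l 1) (e s)) +
        ν l • (fun s => ghForm T c p (0, Pi.single l w) (e s))) := by
    funext s
    simp only [ghForm_single T c p hp, ghCoord, LinearMap.coe_mk, AddHom.coe_mk, Pi.add_apply,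
      Finset.sum_apply, Pi.smul_apply, smul_eq_mul]
    congr 1
    · simp [ghForm, hp]
    · refine Finset.sum_congr rfl fun l _ => ?_
      have hν : ν l * (w - w ^ p) * c = u l * c + v l := by
        simp only [ν]; field_simp
      rw [mul_pow, mul_pow]
      linear_combination (-(e s).2 l ^ p) * hν
  rw [key]
  exact M.add_mem (M.add_mem hone (M.sum_mem fun j _ => M.smul_mem _ (hrow _)))
    (M.sum_mem fun l _ => M.add_mem (M.smul_mem _ (hrow _)) (M.smul_mem _ (hrow _)))

end Form

/-! ### The matrix -/

theorem stmt16 (p t i : ℕ) [Fact p.Prime] (hp : p = 3 ∨ p = 5) (ht : 4 ≤ t)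
    (hi : i + 2 ≤ (t + 3) / 4) :
    ∃ H : Matrix (Fin (p ^ t)) (Fin (p ^ t)) (GaloisField p 4),
      IsGH (p ^ (t - 4)) H ∧ IsNormalized H ∧ IsFpAdditive p (ghCode H) ∧
      kerDim (GaloisField p 4) (ghCode H) = 1 ∧
      (rankC (GaloisField p 4) (ghCode H) : ℤ) = (t : ℤ) + 1 - 2 * i := by
  classical
  have hprime : p.Prime := Fact.out
  have hp0 : p ≠ 0 := hprime.ne_zero
  obtain ⟨m, hm, rfl⟩ : ∃ m, 5 ≤ m ∧ t = m + 4 * i := ⟨t - 4 * i, by omega, by omega⟩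
  let K := GaloisField p 4
  let E := GaloisField p m
  have hfK : Module.finrank (ZMod p) K = 4 := GaloisField.finrank p (by norm_num)
  have hfE : Module.finrank (ZMod p) E = m := GaloisField.finrank p (by omega)
  have hcK : Nat.card K = p ^ 4 := GaloisField.card p 4 (by norm_num)
  have hcE : Nat.card E = p ^ m := GaloisField.card p m (by omega)
  obtain ⟨T, hTs, hTi⟩ := exists_functional (k := ZMod p) (E := E) (K := K) (by omega)
  obtain ⟨c, hc0, hc⟩ := exists_twist (p := p) (K := K) (by rcases hp with rfl | rfl <;> decide)
  obtain ⟨w, hw⟩ := exists_pow_ne (p := p) (K := K) hprime.one_lt (by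
    rw [hcK]; exact lt_self_pow₀ hprime.one_lt (by norm_num))
  let b : Module.Basis (Fin m) (ZMod p) E := Module.finBasisOfFinrankEq (ZMod p) E hfE
  have hcR : Nat.card (E × (Fin i → K)) = p ^ (m + 4 * i) := by
    rw [Nat.card_prod, Nat.card_fun, hcE, hcK, Nat.card_eq_fintype_card, Fintype.card_fin,
      ← pow_mul, ← pow_add]
  have hnpos : 0 < p ^ (m + 4 * i) := pow_pos hprime.pos _
  -- Normalization forces the enumeration of the index group to start at `0`.
  obtain ⟨e, he⟩ : ∃ e : Fin (p ^ (m + 4 * i)) ≃ E × (Fin i → K), e ⟨0, hnpos⟩ = 0 := by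
    let e₀ : Fin (p ^ (m + 4 * i)) ≃ E × (Fin i → K) := (Finite.equivFinOfCardEq hcR).symm
    exact ⟨e₀.trans (Equiv.swap (e₀ ⟨0, hnpos⟩) 0), by simp⟩
  let H : Matrix (Fin (p ^ (m + 4 * i))) (Fin (p ^ (m + 4 * i))) K :=
    fun x y => ghForm T c p (e x) (e y)
  have hz : ∀ s, ghForm T c p (0 : E × (Fin i → K)) s = 0 := fun s => by simp [ghForm, hp0]
  have hCode : ghCode H = {f | ∃ (r : E × (Fin i → K)) (α : K),
      f = fun s => ghForm T c p r (e s) + α} := by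
    ext f
    constructor
    · rintro ⟨x, α, rfl⟩; exact ⟨e x, α, rfl⟩
    · rintro ⟨r, α, rfl⟩; exact ⟨e.symm r, α, by simp [H]⟩
  have hinj := ghCoord_injective T p b hp0 e (hTi b) hw
  have hmem : ∀ f, f ∈ ghCode H ↔ ∃ (r : E × (Fin i → K)) (α : K),
      f = fun s => ghForm T c p r (e s) + α := fun f => by rw [hCode]; rfl
  have hadd : ∀ f g, f ∈ ghCode H → g ∈ ghCode H → f + g ∈ ghCode H := by
    intro f g hf hg
    rw [hmem] at hf hg ⊢
    obtain ⟨r, α, rfl⟩ := hf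
    obtain ⟨r', α', rfl⟩ := hg
    refine ⟨r + r', α + α', funext fun s => ?_⟩
    rw [Pi.add_apply, ghForm_add_left]
    ring
  have hconst : ∀ α : K, (fun _ => α) ∈ ghCode H := fun α =>
    (hmem _).mpr ⟨0, α, funext fun s => by rw [hz, zero_add]⟩
  have hzero : 0 ∈ ghCode H := hconst 0
  have hker : kerSet (ghCode H) = {f | ∃ α : K, f = fun _ => α} := by
    ext f
    constructor
    · intro hf
      have hsm : ∀ α : K, α • f ∈ ghCode H := fun α => by
        rw [← hf α]; exact ⟨0, hzero, add_zero _⟩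
      -- Compare the coordinates of `f` and of `w • f`, both codewords.
      obtain ⟨r, α, hr⟩ := (hmem _).mp (hsm 1)
      obtain ⟨r', α', hr'⟩ := (hmem _).mp (hsm w)
      rw [one_smul] at hr
      rw [ghForm_eq_coord T c p b] at hr hr'
      rw [hr, ← map_smul] at hr'
      have h := hinj hr'
      have h1 : ∀ j, w * algebraMap (ZMod p) K (b.repr r.1 j) =
          algebraMap (ZMod p) K (b.repr r'.1 j) := fun j => congrFun (congrArg (·.2.1) h) j
      have h2 : ∀ l, w * r.2 l = r'.2 l := fun l => congrFun (congrArg (·.2.2.1) h) l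
      have h3 : ∀ l, w * (-c * r.2 l ^ p) = -c * r'.2 l ^ p :=
        fun l => congrFun (congrArg (·.2.2.2) h) l
      have hfix : ∀ x : ZMod p, algebraMap (ZMod p) K x ^ p = algebraMap (ZMod p) K x :=
        fun x => by rw [← map_pow, ZMod.pow_card]
      have hw' : w ^ p - w ≠ 0 := sub_ne_zero.mpr hw
      have hr1 : ∀ j, algebraMap (ZMod p) K (b.repr r.1 j) = 0 := fun j => by
        have h4 := congrArg (· ^ p) (h1 j)
        simp only [mul_pow, hfix] at h4
        rw [← h1 j, ← sub_eq_zero, ← sub_mul] at h4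
        exact (mul_eq_zero.mp h4).resolve_left hw'
      have hr2 : ∀ l, r.2 l = 0 := fun l => by
        have h4 := h3 l
        rw [← h2 l] at h4
        have h5 : (c * (w ^ p - w)) * r.2 l ^ p = 0 := by
          rw [mul_pow] at h4; linear_combination h4
        exact eq_zero_of_pow_eq_zero
          ((mul_eq_zero.mp h5).resolve_left (mul_ne_zero hc0 hw'))
      refine ⟨α, ?_⟩
      rw [hr]
      funext s
      simp [ghCoord, hr1, hr2, hp0]
    · rintro ⟨β, rfl⟩ α
      have h1 : ∀ γ : K, ∀ g ∈ ghCode H, γ • (fun _ => β) + g ∈ ghCode H := fun γ g hg =>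
        hadd _ _ (hconst (γ * β)) hg
      ext g
      constructor
      · rintro ⟨g, hg, rfl⟩
        exact h1 α g hg
      · intro hg
        refine ⟨(-α) • (fun _ => β) + g, h1 _ _ hg, ?_⟩
        simp
  refine ⟨H, ?_, ?_, ?_, ?_, ?_⟩
  · intro x y hxy a
    have hne : e x - e y ≠ 0 := sub_ne_zero.mpr (e.injective.ne hxy)
    have h1 := card_fiber (ghHom T c p (e x - e y))
      (ghForm_surjective T c p hTs hc hne) a
    have h2 : Nat.card {s // H x s - H y s = a} =
        Nat.card {s // ghHom T c p (e x - e y) s = a} := by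
      refine Nat.card_congr (e.subtypeEquiv fun s => ?_)
      have h3 := ghForm_add_left T c p (e x - e y) (e y) (e s)
      rw [sub_add_cancel] at h3
      change ghForm T c p (e x) (e s) - ghForm T c p (e y) (e s) = a ↔
        ghForm T c p (e x - e y) (e s) = a
      rw [h3, add_sub_cancel_right]
    rw [h2]
    rw [hcR, hcK] at h1
    refine Nat.eq_of_mul_eq_mul_right (pow_pos hprime.pos 4) (h1.trans ?_)
    rw [← pow_add, Nat.sub_add_cancel ht]
  · rintro x y (hx | hy)
    · have : x = ⟨0, hnpos⟩ := Fin.ext hx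
      simp only [H, this, he, hz]
    · have : y = ⟨0, hnpos⟩ := Fin.ext hy
      simp only [H, this, he, ghForm_comm T c p _ 0, hz]
  · let S : AddSubmonoid (Fin (p ^ (m + 4 * i)) → K) :=
      { carrier := ghCode H, add_mem' := fun {f g} => hadd f g, zero_mem' := hzero }
    refine ⟨{ S with smul_mem' := fun a f hf => ?_ }, rfl⟩
    have : a • f = a.val • f := by
      rw [← Nat.cast_smul_eq_nsmul (ZMod p), ZMod.natCast_zmod_val]
    rw [this]
    exact S.nsmul_mem hf _
  · have : Nonempty (Fin (p ^ (m + 4 * i))) := ⟨⟨0, hnpos⟩⟩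
    have h1 : Submodule.span K (kerSet (ghCode H)) =
        Submodule.span K {(1 : Fin (p ^ (m + 4 * i)) → K)} := by
      rw [hker]
      apply le_antisymm
      · rw [Submodule.span_le]
        rintro _ ⟨α, rfl⟩
        exact Submodule.mem_span_singleton.mpr ⟨α, by funext s; simp⟩
      · exact Submodule.span_mono (by rintro _ rfl; exact ⟨1, rfl⟩)
    change Module.finrank K (Submodule.span K (kerSet (ghCode H))) = 1
    rw [h1]
    exact finrank_span_singleton one_ne_zero
  · have h1 : Submodule.span K (ghCode H) = LinearMap.range (ghCoord T p b e) := by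
      apply le_antisymm
      · rw [Submodule.span_le]
        intro f hf
        obtain ⟨r, α, rfl⟩ := (hmem f).mp hf
        exact ⟨_, (ghForm_eq_coord T c p b e r α).symm⟩
      · rintro _ ⟨z, rfl⟩
        rw [hCode]
        exact coord_mem_span T c p b hp0 hc0 hw e z
    have h2 : rankC K (ghCode H) = 1 + (m + (i + i)) := by
      change Module.finrank K (Submodule.span K (ghCode H)) = _
      rw [h1, LinearMap.finrank_range_of_inj hinj]
      simp [Module.finrank_prod]
    change (rankC K (ghCode H) : ℤ) = _
    rw [h2]
    push_cast
    ring
end
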